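/- Let d ≥ 2, let Σ ⊂ GL_d(ℝ) be a compact subset, and let μ₀ be a Borel probability measure supported in Σ which is quasi-irreducible and satisfies L_1(μ₀) > L_2(μ₀). Then there exist α ∈ (0,1], θ > 1 and C > 0 such that for every μ₀-stationary Borel probability measure η on ℙ(ℝ^d), every α-Hölder φ : ℙ(ℝ^d) → ℝ, every n ≥ 1 and every v̂ ∈ ℙ(ℝ^d), |Q_{μ₀}^n φ(v̂) − ∫ φ dη| ≤ C θ^{−n} v_α(φ). -/

import Mathlib

open MeasureTheory Filter
open scoped LinearAlgebra.Projectivization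

noncomputable section

abbrev GLd (d : ℕ) := GL (Fin d) ℝ
abbrev Ed (d : ℕ) := EuclideanSpace ℝ (Fin d)
abbrev Pd (d : ℕ) := ℙ ℝ (Ed d)

variable {d : ℕ}

instance : MeasurableSpace (GLd d) := borel _
instance : BorelSpace (GLd d) := ⟨rfl⟩

instance : TopologicalSpace (Pd d) :=
  (instTopologicalSpaceQuotient : TopologicalSpace (Quotient (projectivizationSetoid ℝ (Ed d))))
instance : MeasurableSpace (Pd d) := borel _
instance : BorelSpace (Pd d) := ⟨rfl⟩

/-- The continuous linear map on Euclidean space induced by `g ∈ GL_d(ℝ)`. -/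
def glCLM (g : GLd d) : Ed d →L[ℝ] Ed d :=
  Matrix.toEuclideanCLM (𝕜 := ℝ) (g : Matrix (Fin d) (Fin d) ℝ)

/-- The operator norm of `g ∈ GL_d(ℝ)`. -/
def gnorm (g : GLd d) : ℝ := ‖glCLM g‖

lemma glCLM_leftInv (g : GLd d) (v : Ed d) : glCLM g⁻¹ (glCLM g v) = v := by
  have h : glCLM (d := d) g⁻¹ * glCLM g = 1 := by
    rw [glCLM, glCLM, ← map_mul]
    norm_cast
    rw [inv_mul_cancel g]
    exact map_one _
  calc glCLM g⁻¹ (glCLM g v) = (glCLM g⁻¹ * glCLM g) v := rfl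
    _ = v := by rw [h]; rfl

lemma glLinear_injective (g : GLd d) : Function.Injective (glCLM g).toLinearMap :=
  Function.LeftInverse.injective (g := (glCLM g⁻¹)) (fun v => glCLM_leftInv g v)

/-- The projective action of `g ∈ GL_d(ℝ)` on `ℙ(ℝ^d)`. -/
def pact (g : GLd d) : Pd d → Pd d :=
  Projectivization.map (glCLM g).toLinearMap (glLinear_injective g)

/-- The projective distance `δ` on `ℙ(ℝ^d)`, computed on representatives. -/
def pdelta (x y : Pd d) : ℝ :=
  Real.sqrt (‖x.rep‖ ^ 2 * ‖y.rep‖ ^ 2 - (inner ℝ x.rep y.rep : ℝ) ^ 2) /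
    (‖x.rep‖ * ‖y.rep‖)

/-- Convolution of two measures on `GL_d(ℝ)`. -/
def mconv (μ ν : Measure (GLd d)) : Measure (GLd d) :=
  (μ.prod ν).map (fun p => p.1 * p.2)

/-- `n`-fold convolution power of a measure on `GL_d(ℝ)`. -/
def mconvN (μ : Measure (GLd d)) : ℕ → Measure (GLd d)
  | 0 => Measure.dirac 1
  | n + 1 => if n = 0 then μ else mconv (mconvN μ n) μ

/-- The top Lyapunov exponent of a (compactly supported) measure on `GL_d(ℝ)`. -/
def L1 (μ : Measure (GLd d)) : ℝ :=
  limUnder atTop (fun n : ℕ => (n : ℝ)⁻¹ * ∫ g, Real.log (gnorm g) ∂(mconvN μ n))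

/-- `N₂ g = s₁(g)s₂(g)`, the product of the two largest singular values. -/
def N2 (g : GLd d) : ℝ :=
  sSup { x | ∃ p q : Ed d, ‖p‖ = 1 ∧ ‖q‖ = 1 ∧ (inner ℝ p q : ℝ) = 0 ∧
    x = Real.sqrt (‖glCLM g p‖ ^ 2 * ‖glCLM g q‖ ^ 2 -
      (inner ℝ (glCLM g p) (glCLM g q) : ℝ) ^ 2) }

/-- `L₁(μ) + L₂(μ)`. -/
def L12 (μ : Measure (GLd d)) : ℝ :=
  limUnder atTop (fun n : ℕ => (n : ℝ)⁻¹ * ∫ g, Real.log (N2 g) ∂(mconvN μ n))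

/-- The second Lyapunov exponent. -/
def L2 (μ : Measure (GLd d)) : ℝ := L12 μ - L1 μ

/-- The top Lyapunov exponent of the restriction of `μ` to an (invariant) subspace `V`. -/
def L1rest (μ : Measure (GLd d)) (V : Submodule ℝ (Ed d)) : ℝ :=
  limUnder atTop (fun n : ℕ => (n : ℝ)⁻¹ *
    ∫ g, Real.log ‖LinearMap.toContinuousLinearMap ((glCLM g).toLinearMap.domRestrict V)‖
      ∂(mconvN μ n))

/-- Quasi-irreducibility of a measure on `GL_d(ℝ)`. -/
def QuasiIrreducible (μ : Measure (GLd d)) : Prop :=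
  ¬ ∃ V : Submodule ℝ (Ed d), V ≠ ⊥ ∧ V ≠ ⊤ ∧
    (∀ᵐ g ∂μ, V.map (glCLM g).toLinearMap = V) ∧ L1rest μ V < L1 μ

/-- Irreducibility of a measure on `GL_d(ℝ)`. -/
def Irred (μ : Measure (GLd d)) : Prop :=
  ¬ ∃ V : Submodule ℝ (Ed d), V ≠ ⊥ ∧ V ≠ ⊤ ∧
    (∀ᵐ g ∂μ, V.map (glCLM g).toLinearMap = V)

/-- The Markov operator associated with a measure on `GL_d(ℝ)`. -/
def Qop (μ : Measure (GLd d)) (φ : Pd d → ℝ) : Pd d → ℝ :=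
  fun v => ∫ g, φ (pact g v) ∂μ

/-- The average `α`-Hölder constant of a measure on `GL_d(ℝ)`. -/
def kalpha (α : ℝ) (μ : Measure (GLd d)) : ℝ :=
  sSup { x | ∃ v₁ v₂ : Pd d, v₁ ≠ v₂ ∧
    x = ∫ g, (pdelta (pact g v₁) (pact g v₂) / pdelta v₁ v₂) ^ α ∂μ }

/-- The `α`-Hölder seminorm of an observable on `ℙ(ℝ^d)`. -/
def valpha (α : ℝ) (φ : Pd d → ℝ) : ℝ :=
  sSup { x | ∃ v₁ v₂ : Pd d, v₁ ≠ v₂ ∧ x = |φ v₁ - φ v₂| / pdelta v₁ v₂ ^ α }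

/-- `φ` is `α`-Hölder: `v_α(φ) < ∞`. -/
def IsHolder (α : ℝ) (φ : Pd d → ℝ) : Prop :=
  BddAbove { x | ∃ v₁ v₂ : Pd d, v₁ ≠ v₂ ∧ x = |φ v₁ - φ v₂| / pdelta v₁ v₂ ^ α }

/-- The total variation distance between two finite measures. -/
def tvDist (μ ν : Measure (GLd d)) [IsFiniteMeasure μ] [IsFiniteMeasure ν] : ℝ :=
  ((μ.toSignedMeasure - ν.toSignedMeasure).totalVariation Set.univ).toReal

/-- A measure is compactly supported. -/
def CompactlySupported (μ : Measure (GLd d)) : Prop :=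
  ∃ K : Set (GLd d), IsCompact K ∧ μ Kᶜ = 0

/-- `S` is the (topological) support of `μ`. -/
def IsSupport (μ : Measure (GLd d)) (S : Set (GLd d)) : Prop :=
  μ Sᶜ = 0 ∧ ∀ x ∈ S, ∀ U : Set (GLd d), IsOpen U → x ∈ U → 0 < μ U

/-- A measure `η` on `ℙ(ℝ^d)` is `μ`-stationary. -/
def Stationary (μ : Measure (GLd d)) (η : Measure (Pd d)) : Prop :=
  ∀ φ : Pd d → ℝ, Continuous φ → (∃ C, ∀ v, |φ v| ≤ C) →
    ∫ v, φ v ∂η = ∫ g, ∫ v, φ (pact g v) ∂η ∂μ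


/-! ### Part A: basic API for the convolution powers -/

open scoped Topology

instance instSCT_GLd : SecondCountableTopology (GLd d) :=
  have : SecondCountableTopology (Matrix (Fin d) (Fin d) ℝ) :=
    inferInstanceAs (SecondCountableTopology (Fin d → Fin d → ℝ))
  have : SecondCountableTopology (Matrix (Fin d) (Fin d) ℝ)ᵐᵒᵖ :=
    MulOpposite.opHomeomorph.symm.isEmbedding.secondCountableTopology
  (Units.isEmbedding_embedProduct (M := Matrix (Fin d) (Fin d) ℝ)).secondCountableTopology

lemma glCLM_mul (g h : GLd d) : glCLM (g * h) = glCLM g * glCLM h := by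
  simp [glCLM]

lemma glCLM_mul_apply (g h : GLd d) (v : Ed d) : glCLM (g * h) v = glCLM g (glCLM h v) := by
  rw [glCLM_mul]; rfl

lemma glCLM_one_apply (v : Ed d) : glCLM (1 : GLd d) v = v := by
  simp [glCLM]

@[fun_prop]
lemma continuous_glCLM : Continuous (glCLM : GLd d → Ed d →L[ℝ] Ed d) := by
  have h1 : Continuous (fun A : Matrix (Fin d) (Fin d) ℝ =>
      (Matrix.toEuclideanCLM (𝕜 := ℝ) A : Ed d →L[ℝ] Ed d)) :=
    LinearMap.continuous_of_finiteDimensional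
      ((Matrix.toEuclideanCLM (𝕜 := ℝ) (n := Fin d)).toAlgEquiv.toLinearMap)
  exact h1.comp Units.continuous_val

lemma glCLM_ne_zero (g : GLd d) {v : Ed d} (hv : v ≠ 0) : glCLM g v ≠ 0 := by
  intro h
  apply hv
  rw [← glCLM_leftInv g v, h, map_zero]

lemma mconv_eq (μ ν : Measure (GLd d)) : mconv μ ν = Measure.mconv μ ν := rfl

instance instProb_mconv (μ ν : Measure (GLd d)) [IsProbabilityMeasure μ]
    [IsProbabilityMeasure ν] : IsProbabilityMeasure (mconv μ ν) := by
  rw [mconv]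
  exact Measure.isProbabilityMeasure_map (by fun_prop)

instance instProb_mconvN (μ : Measure (GLd d)) [IsProbabilityMeasure μ] (n : ℕ) :
    IsProbabilityMeasure (mconvN μ n) := by
  induction n with
  | zero => rw [mconvN]; infer_instance
  | succ n ih =>
    rw [mconvN]
    split_ifs <;> infer_instance

lemma mconvN_succ (μ : Measure (GLd d)) [IsProbabilityMeasure μ] (n : ℕ) :
    mconvN μ (n + 1) = mconv (mconvN μ n) μ := by
  rw [mconvN]
  split_ifs with h
  · subst h
    rw [mconvN, mconv_eq, Measure.dirac_one_mconv]
  · rfl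

lemma mconvN_one (μ : Measure (GLd d)) : mconvN μ 1 = μ := by
  rw [mconvN]; simp

lemma mconvN_add (μ : Measure (GLd d)) [IsProbabilityMeasure μ] (m n : ℕ) :
    mconvN μ (m + n) = mconv (mconvN μ m) (mconvN μ n) := by
  induction n with
  | zero => rw [add_zero, mconvN, mconv_eq, Measure.mconv_dirac_one]
  | succ n ih =>
    rw [← add_assoc, mconvN_succ, ih, mconvN_succ]
    simp only [mconv_eq]
    exact Measure.mconv_assoc _ _ _

lemma ae_mconv {μ ν : Measure (GLd d)} [IsProbabilityMeasure μ] [IsProbabilityMeasure ν]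
    {p q r : GLd d → Prop} (hp : ∀ᵐ g ∂μ, p g) (hq : ∀ᵐ g ∂ν, q g)
    (h : ∀ g h, p g → q h → r (g * h)) (hr : MeasurableSet {g | r g}) :
    ∀ᵐ g ∂(mconv μ ν), r g := by
  rw [mconv, ae_map_iff (by fun_prop) hr]
  have h1 := Measure.quasiMeasurePreserving_fst (μ := μ) (ν := ν) |>.ae hp
  have h2 := Measure.quasiMeasurePreserving_snd (μ := μ) (ν := ν) |>.ae hq
  filter_upwards [h1, h2] with x hx hy using h _ _ hx hy

/-- Standing assumption: `μ` is a probability measure carried by a compact set. -/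
structure CptProb (μ : Measure (GLd d)) : Prop where
  prob : IsProbabilityMeasure μ
  cpt : ∃ K : Set (GLd d), IsCompact K ∧ μ Kᶜ = 0

lemma CptProb.cptN {μ : Measure (GLd d)} (hμ : CptProb μ) (n : ℕ) :
    ∃ K : Set (GLd d), IsCompact K ∧ ∀ᵐ g ∂(mconvN μ n), g ∈ K := by
  have := hμ.prob
  induction n with
  | zero =>
    refine ⟨{1}, isCompact_singleton, ?_⟩
    rw [mconvN, ae_dirac_iff] <;> simp
  | succ n ih =>
    obtain ⟨K, hK, hK'⟩ := ih
    obtain ⟨K2, hK2, hK2'⟩ := hμ.cpt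
    refine ⟨(fun p : GLd d × GLd d => p.1 * p.2) '' (K ×ˢ K2),
      (hK.prod hK2).image continuous_mul, ?_⟩
    rw [mconvN_succ]
    refine ae_mconv hK' (q := fun g => g ∈ K2) (by rw [ae_iff]; exact hK2') ?_ ?_
    · intro g h hg hh
      exact ⟨(g, h), ⟨hg, hh⟩, rfl⟩
    · exact ((hK.prod hK2).image continuous_mul).isClosed.measurableSet

lemma CptProb.integrable {μ : Measure (GLd d)} (hμ : CptProb μ) (n : ℕ) {F : GLd d → ℝ}
    (hF : Continuous F) : Integrable F (mconvN μ n) := by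
  have := hμ.prob
  obtain ⟨K, hK, hK'⟩ := hμ.cptN n
  have h1 : IntegrableOn F K (mconvN μ n) := hF.continuousOn.integrableOn_compact hK
  rwa [IntegrableOn, Measure.restrict_eq_self_of_ae_mem hK'] at h1

lemma CptProb.integrable_prod {μ : Measure (GLd d)} (hμ : CptProb μ) (m n : ℕ) {F : GLd d → ℝ}
    (hF : Continuous F) :
    Integrable (fun p : GLd d × GLd d => F (p.1 * p.2)) ((mconvN μ m).prod (mconvN μ n)) := by
  have := hμ.prob
  have h := hμ.integrable (m + n) hF
  rw [mconvN_add, mconv, integrable_map_measure hF.aestronglyMeasurable (by fun_prop)] at h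
  exact h

lemma CptProb.integral_add {μ : Measure (GLd d)} (hμ : CptProb μ) (m n : ℕ) {F : GLd d → ℝ}
    (hF : Continuous F) :
    ∫ g, F g ∂(mconvN μ (m + n)) = ∫ h, ∫ g, F (g * h) ∂(mconvN μ m) ∂(mconvN μ n) := by
  have := hμ.prob
  rw [mconvN_add, mconv, integral_map (by fun_prop) hF.aestronglyMeasurable]
  exact integral_prod_symm _ (hμ.integrable_prod m n hF)

lemma CptProb.integral_add' {μ : Measure (GLd d)} (hμ : CptProb μ) (m n : ℕ) {F : GLd d → ℝ}
    (hF : Continuous F) :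
    ∫ g, F g ∂(mconvN μ (m + n)) = ∫ g, ∫ h, F (g * h) ∂(mconvN μ n) ∂(mconvN μ m) := by
  have := hμ.prob
  rw [mconvN_add, mconv, integral_map (by fun_prop) hF.aestronglyMeasurable]
  exact integral_prod _ (hμ.integrable_prod m n hF)

lemma CptProb.integrable_inner {μ : Measure (GLd d)} (hμ : CptProb μ) (m n : ℕ) {F : GLd d → ℝ}
    (hF : Continuous F) :
    Integrable (fun h => ∫ g, F (g * h) ∂(mconvN μ m)) (mconvN μ n) := by
  have := hμ.prob
  exact (hμ.integrable_prod m n hF).integral_prod_right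

/-- uniform bounds -/
lemma CptProb.bound {μ : Measure (GLd d)} (hμ : CptProb μ) :
    ∃ M : ℝ, 1 ≤ M ∧ ∀ n, ∀ᵐ g ∂(mconvN μ n), ∀ v : Ed d,
      ‖glCLM g v‖ ≤ M ^ n * ‖v‖ ∧ ‖v‖ ≤ M ^ n * ‖glCLM g v‖ := by
  have := hμ.prob
  obtain ⟨K, hK, hK'⟩ := hμ.cpt
  obtain ⟨M1, hM1⟩ := hK.exists_bound_of_continuousOn (f := fun g => glCLM g)
    (by fun_prop)
  obtain ⟨M2, hM2⟩ := hK.exists_bound_of_continuousOn (f := fun g : GLd d => glCLM g⁻¹)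
    (by fun_prop)
  refine ⟨max 1 (max M1 M2), le_max_left _ _, ?_⟩
  set M := max 1 (max M1 M2) with hM
  have hM1' : M1 ≤ M := (le_max_left _ _).trans (le_max_right _ _)
  have hM2' : M2 ≤ M := (le_max_right _ _).trans (le_max_right _ _)
  have hM0 : 0 ≤ M := zero_le_one.trans (le_max_left _ _)
  intro n
  induction n with
  | zero =>
    rw [mconvN]
    rw [ae_dirac_eq]
    simp [glCLM_one_apply]
  | succ n ih =>
    rw [mconvN_succ]
    refine ae_mconv ih (q := fun g => g ∈ K) (by rw [ae_iff]; exact hK') ?_ ?_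
    · intro g h hg hh v
      rw [glCLM_mul_apply]
      have h1 : ‖glCLM h v‖ ≤ M * ‖v‖ :=
        (ContinuousLinearMap.le_opNorm _ _).trans (by gcongr; exact (hM1 h hh).trans hM1')
      have h2 : ‖v‖ ≤ M * ‖glCLM h v‖ := by
        calc ‖v‖ = ‖glCLM h⁻¹ (glCLM h v)‖ := by rw [glCLM_leftInv]
          _ ≤ _ := (ContinuousLinearMap.le_opNorm _ _).trans
            (by gcongr; exact (hM2 h hh).trans hM2')
      obtain ⟨h3, h4⟩ := hg (glCLM h v)
      constructor
      · calc _ ≤ _ := h3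
          _ ≤ M ^ n * (M * ‖v‖) := by gcongr
          _ = _ := by ring
      · calc _ ≤ _ := h2
          _ ≤ M * (M ^ n * ‖glCLM g (glCLM h v)‖) := by gcongr
          _ = _ := by ring
    · apply IsClosed.measurableSet
      simp only [Set.ofPred_forall, Set.ofPred_and]
      refine isClosed_iInter fun v => IsClosed.inter ?_ ?_
      · exact isClosed_le (by fun_prop) (by fun_prop)
      · exact isClosed_le (by fun_prop) (by fun_prop)

/-- log version of the uniform bounds -/
lemma CptProb.logbound {μ : Measure (GLd d)} (hμ : CptProb μ) :
    ∃ R : ℝ, 0 ≤ R ∧ ∀ n : ℕ, ∀ᵐ g ∂(mconvN μ n), ∀ v : Ed d, v ≠ 0 →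
      |Real.log ‖glCLM g v‖ - Real.log ‖v‖| ≤ n * R := by
  obtain ⟨M, hM, h⟩ := hμ.bound
  refine ⟨Real.log M, Real.log_nonneg hM, fun n => ?_⟩
  filter_upwards [h n] with g hg v hv
  obtain ⟨h1, h2⟩ := hg v
  have hM0 : 0 < M := by linarith
  have hv' : 0 < ‖v‖ := norm_pos_iff.2 hv
  have hgv : 0 < ‖glCLM g v‖ := norm_pos_iff.2 (glCLM_ne_zero g hv)
  have e1 := Real.log_le_log hgv h1
  have e2 := Real.log_le_log hv' h2
  rw [Real.log_mul (by positivity) (by positivity), Real.log_pow] at e1 e2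
  rw [abs_le]
  constructor <;> linarith

lemma cont_log_norm {v : Ed d} (hv : v ≠ 0) : Continuous fun g : GLd d => Real.log ‖glCLM g v‖ := by
  refine Continuous.log (by fun_prop) fun g => ?_
  exact norm_ne_zero_iff.2 (glCLM_ne_zero g hv)

/-- submultiplicativity of operators on nonneg functions -/
lemma CptProb.submul {μ : Measure (GLd d)} (hμ : CptProb μ) {Y : Type*} (F : Y → ℝ) (act : GLd d → Y → Y)
    (good : Y → Prop) (hgood : ∀ g y, good y → good (act g y))
    (hact : ∀ g h y, act (g * h) y = act g (act h y))
    (hF : ∀ y, good y → Continuous fun g => F (act g y)) {m n : ℕ} {a b : ℝ} (ha : 0 ≤ a)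
    (h1 : ∀ y, good y → ∫ g, F (act g y) ∂(mconvN μ m) ≤ a * F y)
    (h2 : ∀ y, good y → ∫ g, F (act g y) ∂(mconvN μ n) ≤ b * F y) :
    ∀ y, good y → ∫ g, F (act g y) ∂(mconvN μ (m + n)) ≤ a * b * F y := by
  intro y hy
  rw [hμ.integral_add m n (hF y hy)]
  calc _ ≤ ∫ h, a * F (act h y) ∂(mconvN μ n) := by
        refine integral_mono (hμ.integrable_inner m n (hF y hy))
          ((hμ.integrable n (hF y hy)).const_mul a) fun h => ?_
        simp only [hact]
        exact h1 _ (hgood _ _ hy)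
    _ = a * ∫ h, F (act h y) ∂(mconvN μ n) := integral_const_mul _ _
    _ ≤ a * (b * F y) := by gcongr; exact h2 y hy
    _ = _ := by ring

lemma CptProb.submul_pow {μ : Measure (GLd d)} (hμ : CptProb μ) {Y : Type*} (F : Y → ℝ)
    (act : GLd d → Y → Y)
    (good : Y → Prop) (hgood : ∀ g y, good y → good (act g y))
    (hact : ∀ g h y, act (g * h) y = act g (act h y)) (hone : ∀ y, act 1 y = y)
    (hF : ∀ y, good y → Continuous fun g => F (act g y)) {N : ℕ} {a : ℝ} (ha : 0 ≤ a)
    (h1 : ∀ y, good y → ∫ g, F (act g y) ∂(mconvN μ N) ≤ a * F y) (q : ℕ) :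
    ∀ y, good y → ∫ g, F (act g y) ∂(mconvN μ (q * N)) ≤ a ^ q * F y := by
  induction q with
  | zero =>
    intro y hy
    simp only [zero_mul, mconvN, pow_zero, one_mul]
    rw [integral_dirac, hone]
  | succ q ih =>
    rw [add_mul, one_mul, pow_succ]
    exact hμ.submul F act good hgood hact hF (by positivity) ih h1

/-- small exponential moments -/
lemma CptProb.exp_moment {μ : Measure (GLd d)} (hμ : CptProb μ) {n : ℕ} {X : GLd d → ℝ}
    (hX : Continuous X) {R c t : ℝ} (hR : ∀ᵐ g ∂(mconvN μ n), |X g| ≤ R)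
    (hc : ∫ g, X g ∂(mconvN μ n) ≤ c) (ht : 0 ≤ t) (htR : t * R ≤ 1) :
    ∫ g, Real.exp (t * X g) ∂(mconvN μ n) ≤ 1 + t * c + t ^ 2 * R ^ 2 := by
  have := hμ.prob
  calc _ ≤ ∫ g, ((1 + t ^ 2 * R ^ 2) + t * X g) ∂(mconvN μ n) := by
        refine integral_mono_ae (hμ.integrable n (by fun_prop)) (hμ.integrable n (by fun_prop)) ?_
        filter_upwards [hR] with g hg
        have h0 : |t * X g| ≤ t * R := by
          rw [abs_mul, abs_of_nonneg ht]; gcongr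
        have h1 := (abs_le.1 (Real.abs_exp_sub_one_sub_id_le (h0.trans htR))).2
        have h2 : (t * X g) ^ 2 ≤ (t * R) ^ 2 := sq_le_sq.2 (h0.trans (le_abs_self _))
        have h3 : (t * R) ^ 2 = t ^ 2 * R ^ 2 := by ring
        show Real.exp (t * X g) ≤ 1 + t ^ 2 * R ^ 2 + t * X g
        linarith
    _ = (1 + t ^ 2 * R ^ 2) + t * ∫ g, X g ∂(mconvN μ n) := by
        rw [MeasureTheory.integral_add (integrable_const _) ((hμ.integrable n hX).const_mul t),
          integral_const_mul]
        simp
    _ ≤ _ := by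
        have := mul_le_mul_of_nonneg_left hc ht
        linarith


/-! ### Part B: the minimal growth rate -/

/-- expected logarithmic growth of a vector -/
def aF (μ : Measure (GLd d)) (n : ℕ) (v : Ed d) : ℝ :=
  ∫ g, (Real.log ‖glCLM g v‖ - Real.log ‖v‖) ∂(mconvN μ n)

lemma CptProb.aF_abs {μ : Measure (GLd d)} (hμ : CptProb μ) {R : ℝ} {n : ℕ}
    (hR : ∀ᵐ g ∂(mconvN μ n), ∀ v : Ed d, v ≠ 0 →
      |Real.log ‖glCLM g v‖ - Real.log ‖v‖| ≤ n * R) {v : Ed d} (hv : v ≠ 0) :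
    |aF μ n v| ≤ n * R := by
  have := hμ.prob
  have h := norm_integral_le_of_norm_le_const (μ := mconvN μ n)
    (f := fun g => (Real.log ‖glCLM g v‖ - Real.log ‖v‖)) (C := n * R)
    (by filter_upwards [hR] with g hg using hg v hv)
  simpa [aF] using h

lemma CptProb.aF_add_ge {μ : Measure (GLd d)} (hμ : CptProb μ) {m n : ℕ} {c : ℝ}
    (hc : ∀ w : Ed d, w ≠ 0 → c ≤ aF μ m w) {v : Ed d} (hv : v ≠ 0) :
    aF μ n v + c ≤ aF μ (m + n) v := by
  have := hμ.prob
  have hcont : Continuous fun g : GLd d => Real.log ‖glCLM g v‖ - Real.log ‖v‖ :=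
    (cont_log_norm hv).sub continuous_const
  rw [aF, aF, hμ.integral_add m n hcont]
  calc _ = ∫ h, ((Real.log ‖glCLM h v‖ - Real.log ‖v‖) + c) ∂(mconvN μ n) := by
        rw [MeasureTheory.integral_add (hμ.integrable n hcont) (integrable_const _)]
        simp
    _ ≤ _ := by
        refine integral_mono ((hμ.integrable n hcont).add (integrable_const _))
          (hμ.integrable_inner m n hcont) fun h => ?_
        have h1 := hc (glCLM h v) (glCLM_ne_zero h hv)
        have h2 : ∫ g, (Real.log ‖glCLM (g * h) v‖ - Real.log ‖v‖) ∂(mconvN μ m)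
            = aF μ m (glCLM h v) + (Real.log ‖glCLM h v‖ - Real.log ‖v‖) := by
          have hc' : Continuous fun g : GLd d =>
              Real.log ‖glCLM g (glCLM h v)‖ - Real.log ‖glCLM h v‖ :=
            (cont_log_norm (glCLM_ne_zero h hv)).sub continuous_const
          rw [aF, ← sub_eq_iff_eq_add]
          have : ∫ g, (Real.log ‖glCLM (g * h) v‖ - Real.log ‖v‖) ∂(mconvN μ m)
            = ∫ g, ((Real.log ‖glCLM g (glCLM h v)‖ - Real.log ‖glCLM h v‖) +
              (Real.log ‖glCLM h v‖ - Real.log ‖v‖)) ∂(mconvN μ m) := by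
            congr 1; ext g; rw [glCLM_mul_apply]; ring
          rw [this, MeasureTheory.integral_add (hμ.integrable m hc') (integrable_const _)]
          simp
        show (Real.log ‖glCLM h v‖ - Real.log ‖v‖) + c ≤ _
        rw [h2]; linarith

lemma CptProb.aF_cont {μ : Measure (GLd d)} (hμ : CptProb μ) (n : ℕ) :
    Continuous fun v : Metric.sphere (0 : Ed d) 1 => aF μ n v := by
  have := hμ.prob
  obtain ⟨R, hR0, hR⟩ := hμ.logbound
  have hne : ∀ v : Metric.sphere (0 : Ed d) 1, (v : Ed d) ≠ 0 := fun v =>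
    ne_zero_of_mem_unit_sphere v
  refine continuous_of_dominated (bound := fun _ => n * R) (fun v => ?_) (fun v => ?_)
    (integrable_const _) ?_
  · exact ((cont_log_norm (hne v)).sub continuous_const).aestronglyMeasurable
  · filter_upwards [hR n] with g hg using hg _ (hne v)
  · refine Eventually.of_forall fun g => ?_
    refine Continuous.sub (Continuous.log (by fun_prop) fun v => ?_)
      (Continuous.log (by fun_prop) fun v => ?_)
    · exact norm_ne_zero_iff.2 (glCLM_ne_zero g (hne v))
    · exact norm_ne_zero_iff.2 (hne v)

lemma aF_smul (μ : Measure (GLd d)) (n : ℕ) {v : Ed d} (hv : v ≠ 0) {c : ℝ} (hc : c ≠ 0) :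
    aF μ n (c • v) = aF μ n v := by
  rw [aF, aF]
  congr 1; ext g
  rw [map_smul, norm_smul, norm_smul, Real.log_mul (norm_ne_zero_iff.2 hc)
    (norm_ne_zero_iff.2 (glCLM_ne_zero g hv)), Real.log_mul (norm_ne_zero_iff.2 hc)
    (norm_ne_zero_iff.2 hv)]
  ring

lemma CptProb.min_growth (hd : 2 ≤ d) {μ : Measure (GLd d)} (hμ : CptProb μ) :
    ∃ (β : ℝ) (m : ℕ → ℝ), (∀ n w, w ≠ 0 → m n ≤ aF μ n w) ∧
      Tendsto (fun n : ℕ => m n / n) atTop (𝓝 β) ∧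
      ∃ v₀ : Ed d, v₀ ≠ 0 ∧ ∀ k : ℕ, aF μ k v₀ ≤ k * β := by
  have := hμ.prob
  have : Nonempty (Fin d) := ⟨⟨0, by omega⟩⟩
  have hne : ∀ v : Metric.sphere (0 : Ed d) 1, (v : Ed d) ≠ 0 := fun v =>
    ne_zero_of_mem_unit_sphere v
  have hnon : Nonempty (Metric.sphere (0 : Ed d) 1) :=
    (NormedSpace.sphere_nonempty.2 zero_le_one).to_subtype
  obtain ⟨R, hR0, hR⟩ := hμ.logbound
  have hmin : ∀ n, ∃ v : Metric.sphere (0 : Ed d) 1, ∀ w : Ed d, w ≠ 0 →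
      aF μ n v ≤ aF μ n w := by
    intro n
    obtain ⟨v, -, hv'⟩ := isCompact_univ.exists_isMinOn Set.univ_nonempty
      (hμ.aF_cont n).continuousOn
    have hv : ∀ w : Metric.sphere (0 : Ed d) 1, aF μ n v ≤ aF μ n w := fun w =>
      hv' (Set.mem_univ w)
    refine ⟨v, fun w hw => ?_⟩
    have hw' : ‖w‖⁻¹ ≠ 0 := inv_ne_zero (norm_ne_zero_iff.2 hw)
    rw [← aF_smul μ n hw hw']
    refine hv ⟨‖w‖⁻¹ • w, ?_⟩
    rw [mem_sphere_zero_iff_norm, norm_smul, norm_inv, norm_norm,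
      inv_mul_cancel₀ (norm_ne_zero_iff.2 hw)]
  choose vm hvm using hmin
  set m : ℕ → ℝ := fun n => aF μ n (vm n) with hm
  have key : ∀ j k, aF μ k (vm (j + k)) + m j ≤ m (j + k) := fun j k =>
    hμ.aF_add_ge (hvm j) (hne _)
  have hsub : Subadditive (fun n => - m n) := by
    intro j k
    have h1 := key j k
    have h2 := hvm k (vm (j + k)) (hne _)
    have h3 : m k ≤ aF μ k (vm (j + k)) := h2
    show - m (j + k) ≤ - m j + - m k
    linarith
  have hbd : BddBelow (Set.range fun n : ℕ => (- m n) / n) := by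
    refine ⟨-R, ?_⟩
    rintro _ ⟨n, rfl⟩
    rcases Nat.eq_zero_or_pos n with rfl | hn
    · simpa using hR0
    · have := hμ.aF_abs (hR n) (hne (vm n))
      have h2 : (0 : ℝ) < n := by exact_mod_cast hn
      show -R ≤ - m n / n
      rw [le_div_iff₀ h2]
      have := (abs_le.1 this).2
      show -R * n ≤ - aF μ n (vm n)
      linarith
  have hlim := hsub.tendsto_lim hbd
  set β := - hsub.lim with hβ
  have hlim' : Tendsto (fun n : ℕ => m n / n) atTop (𝓝 β) := by
    have := hlim.neg
    refine this.congr fun n => ?_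
    ring
  have hmle : ∀ n : ℕ, m n ≤ n * β := by
    intro n
    rcases Nat.eq_zero_or_pos n with rfl | hn
    · have := (abs_le.1 (hμ.aF_abs (hR 0) (hne (vm 0)))).2
      simpa using this
    · have h2 : (0 : ℝ) < n := by exact_mod_cast hn
      have := hsub.lim_le_div hbd hn.ne'
      rw [le_div_iff₀ h2] at this
      have h3 : hsub.lim = -β := by simp [hβ]
      rw [h3] at this
      linarith
  refine ⟨β, m, fun n w hw => hvm n w hw, hlim', ?_⟩
  have hrec : ∀ i : ℕ, ∃ v : Metric.sphere (0 : Ed d) 1, ∀ k ≤ i,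
      aF μ k v ≤ k * (β + 1 / ((i : ℝ) + 1)) := by
    intro i
    set ε : ℝ := 1 / ((i : ℝ) + 1) with hε
    have hε0 : 0 < ε := by positivity
    have ht : Tendsto (fun n : ℕ => n * (β + ε) - m n) atTop atTop := by
      refine tendsto_atTop_mono (f := fun n : ℕ => (n : ℝ) * ε) (fun n => ?_) ?_
      · have := hmle n
        linarith
      · exact tendsto_natCast_atTop_atTop.atTop_mul_const hε0
    obtain ⟨n, hn, hrec⟩ := high_scores ht i
    refine ⟨vm n, fun k hk => ?_⟩
    have h1 := key (n - k) k
    rw [Nat.sub_add_cancel (hk.trans hn)] at h1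
    rcases Nat.eq_zero_or_pos k with rfl | hk0
    · have := (abs_le.1 (hμ.aF_abs (hR 0) (hne (vm n)))).2
      simpa using this
    · have h2 := hrec (n - k) (by omega)
      rw [Nat.cast_sub (hk.trans hn)] at h2
      linarith
  choose u hu using hrec
  obtain ⟨v, -, s, hs, hsv⟩ := isCompact_univ.tendsto_subseq (fun n => Set.mem_univ (u n))
  refine ⟨v, hne v, fun k => ?_⟩
  have e1 : Tendsto (fun i => aF μ k (u (s i))) atTop (𝓝 (aF μ k v)) :=
    ((hμ.aF_cont k).tendsto v).comp hsv
  have e2 : Tendsto (fun i : ℕ => (k : ℝ) * (β + 1 / ((s i : ℝ) + 1))) atTop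
      (𝓝 (k * (β + 0))) :=
    ((tendsto_one_div_add_atTop_nhds_zero_nat.comp hs.tendsto_atTop).const_add β).const_mul _
  rw [add_zero] at e2
  refine le_of_tendsto_of_tendsto e1 e2 ?_
  filter_upwards [hs.tendsto_atTop.eventually_ge_atTop k] with i hi
  exact hu (s i) k hi


/-! ### Part C: lower tail estimate -/

lemma CptProb.integral_affine {μ : Measure (GLd d)} (hμ : CptProb μ) {n : ℕ} {X : GLd d → ℝ}
    (hX : Continuous X) (a b : ℝ) :
    ∫ g, (a + b * X g) ∂(mconvN μ n) = a + b * ∫ g, X g ∂(mconvN μ n) := by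
  have := hμ.prob
  rw [MeasureTheory.integral_add (integrable_const _) ((hμ.integrable n hX).const_mul b),
    integral_const_mul]
  simp

lemma CptProb.lower_tail {μ : Measure (GLd d)} (hμ : CptProb μ) {β : ℝ} {m : ℕ → ℝ}
    (hm : ∀ n w, w ≠ 0 → m n ≤ aF μ n w)
    (hlim : Tendsto (fun n : ℕ => m n / n) atTop (𝓝 β)) {ε : ℝ} (hε : 0 < ε) (n₀ : ℕ) :
    ∃ n, n₀ ≤ n ∧ 1 ≤ n ∧ ∀ v : Ed d, v ≠ 0 →
      ∫ g, max 0 (-(Real.log ‖glCLM g v‖ - Real.log ‖v‖ - n * β)) ∂(mconvN μ n) ≤ ε * n := by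
  have := hμ.prob
  obtain ⟨R₀, hR₀, hR⟩ := hμ.logbound
  obtain ⟨N, hN1, hN2⟩ := ((eventually_ge_atTop 1).and
    (hlim.eventually (eventually_ge_nhds (show β - ε / 3 < β by linarith)))).exists
  have hN0 : (0 : ℝ) < N := by exact_mod_cast hN1
  set b := β - ε / 3 with hb
  have hmN : N * b ≤ m N := by
    rw [le_div_iff₀ hN0] at hN2; linarith
  set R : ℝ := N * R₀ + |N * b| + 1 with hRdef
  have hRpos : 0 < R := by positivity
  set t : ℝ := min (1 / R) (N * ε / (3 * R ^ 2)) with htdef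
  have ht0 : 0 < t := by positivity
  have htR : t * R ≤ 1 := by
    calc t * R ≤ 1 / R * R := by gcongr; exact min_le_left _ _
      _ = 1 := by field_simp
  have htR2 : t * R ^ 2 ≤ N * ε / 3 := by
    calc t * R ^ 2 ≤ N * ε / (3 * R ^ 2) * R ^ 2 := by gcongr; exact min_le_right _ _
      _ = _ := by field_simp
  -- one block
  set a : ℝ := (1 + t ^ 2 * R ^ 2) * Real.exp (-(t * (N * b))) with ha
  have hblock : ∀ v : Ed d, v ≠ 0 →
      ∫ g, Real.exp (-(t * Real.log ‖glCLM g v‖)) ∂(mconvN μ N) ≤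
        a * Real.exp (-(t * Real.log ‖v‖)) := by
    intro v hv
    have hX : Continuous fun g : GLd d =>
        -(Real.log ‖glCLM g v‖ - Real.log ‖v‖ - N * b) :=
      (((cont_log_norm hv).sub continuous_const).sub continuous_const).neg
    have h1 := hμ.exp_moment (n := N) hX (R := R) (c := 0) (t := t) ?_ ?_ ht0.le htR
    · have h2 : ∀ g : GLd d, Real.exp (-(t * Real.log ‖glCLM g v‖)) =
          (Real.exp (-(t * (N * b))) * Real.exp (-(t * Real.log ‖v‖))) *
            Real.exp (t * -(Real.log ‖glCLM g v‖ - Real.log ‖v‖ - N * b)) := by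
        intro g
        rw [← Real.exp_add, ← Real.exp_add]
        congr 1; ring
      simp_rw [h2]
      rw [integral_const_mul]
      calc _ ≤ (Real.exp (-(t * (N * b))) * Real.exp (-(t * Real.log ‖v‖))) *
            (1 + t * 0 + t ^ 2 * R ^ 2) := by gcongr
        _ = _ := by rw [ha]; ring
    · filter_upwards [hR N] with g hg
      rw [abs_neg]
      calc _ ≤ _ := abs_sub _ _
        _ ≤ N * R₀ + |N * b| := by gcongr; exact hg v hv
        _ ≤ R := by rw [hRdef]; linarith
    · have h3 := hμ.integral_affine (n := N)
        ((cont_log_norm hv).sub (continuous_const (y := Real.log ‖v‖))) (N * b) (-1)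
      have h4 := hm N v hv
      have h5 : ∫ g, ((N * b) + (-1) * (Real.log ‖glCLM g v‖ - Real.log ‖v‖)) ∂(mconvN μ N)
        = (N * b) + (-1) * aF μ N v := h3
      calc _ = ∫ g, ((N * b) + (-1) * (Real.log ‖glCLM g v‖ - Real.log ‖v‖)) ∂(mconvN μ N) := by
            congr 1; ext g; ring
        _ ≤ 0 := by rw [h5]; linarith
  have hcontF : ∀ v : Ed d, v ≠ 0 → Continuous fun g : GLd d =>
      Real.exp (-(t * Real.log ‖glCLM g v‖)) := fun v hv =>
    Real.continuous_exp.comp ((cont_log_norm hv).const_mul t).neg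
  have hpow := hμ.submul_pow (fun v : Ed d => Real.exp (-(t * Real.log ‖v‖)))
    (fun g v => glCLM g v) (fun v => v ≠ 0) (fun g v hv => glCLM_ne_zero g hv)
    (fun g h v => glCLM_mul_apply g h v) glCLM_one_apply hcontF (by positivity) hblock
  obtain ⟨q₁, hq₁⟩ := exists_nat_ge (3 / (t * N * ε))
  set q := max 1 (max n₀ q₁) with hq
  have hq1 : 1 ≤ q := le_max_left _ _
  have hqn : n₀ ≤ q := (le_max_left _ _).trans (le_max_right _ _)
  have hqq : q₁ ≤ q := (le_max_right _ _).trans (le_max_right _ _)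
  have hqt : 1 / t ≤ q * N * ε / 3 := by
    have : 3 / (t * N * ε) ≤ q := hq₁.trans (by exact_mod_cast hqq)
    rw [div_le_iff₀ (by positivity)] at this
    rw [div_le_iff₀ ht0]
    linarith
  refine ⟨q * N, hqn.trans (Nat.le_mul_of_pos_right _ hN1), Nat.mul_pos hq1 hN1, fun v hv => ?_⟩
  have h1 := hpow q v hv
  set c : ℝ := 1 + q * (t ^ 2 * R ^ 2) with hc
  have hc1 : 1 ≤ c := by
    have : (0 : ℝ) ≤ q * (t ^ 2 * R ^ 2) := by positivity
    linarith
  have haq : a ^ q ≤ Real.exp (q * (t ^ 2 * R ^ 2)) * Real.exp (-(t * ((q * N) * b))) := by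
    rw [ha, mul_pow]
    gcongr
    · rw [Real.exp_nat_mul]
      gcongr
      linarith [Real.add_one_le_exp (t ^ 2 * R ^ 2)]
    · rw [← Real.exp_nat_mul]
      apply le_of_eq
      congr 1; ring
  set n : ℕ := q * N with hn
  have hnc : (n : ℝ) = q * N := by rw [hn]; push_cast; ring
  rw [← hnc] at haq
  -- pointwise bound
  have hpt : ∀ g : GLd d, max 0 (-(Real.log ‖glCLM g v‖ - Real.log ‖v‖ - n * β)) ≤
      n * ε / 3 + (1 / t) * ((c - 1) + Real.exp (t * (n * b) - c + t * Real.log ‖v‖) *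
        Real.exp (-(t * Real.log ‖glCLM g v‖))) := by
    intro g
    rw [← Real.exp_add]
    set L := Real.log ‖glCLM g v‖ with hL
    set L' := Real.log ‖v‖ with hL'
    have e1 := Real.add_one_le_exp (t * (n * b) - c + t * L' + -(t * L))
    have e2 := Real.exp_pos (t * (n * b) - c + t * L' + -(t * L))
    set E := Real.exp (t * (n * b) - c + t * L' + -(t * L)) with hE
    apply max_le
    · have : 0 ≤ c - 1 := by linarith
      positivity
    · have e3 : n * β = n * b + n * ε / 3 := by rw [hb]; ring
      have e4 : -(L - L' - n * b) ≤ (1 / t) * ((c - 1) + E) := by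
        rw [one_div, le_inv_mul_iff₀ ht0]
        linarith
      linarith
  have hcontm : Continuous fun g : GLd d =>
      max 0 (-(Real.log ‖glCLM g v‖ - Real.log ‖v‖ - n * β)) :=
    continuous_const.max
      (((cont_log_norm hv).sub continuous_const).sub continuous_const).neg
  calc _ ≤ ∫ g, (n * ε / 3 + (1 / t) * ((c - 1) +
          Real.exp (t * (n * b) - c + t * Real.log ‖v‖) *
        Real.exp (-(t * Real.log ‖glCLM g v‖)))) ∂(mconvN μ n) := by
        refine integral_mono (hμ.integrable n hcontm) (hμ.integrable n ?_) hpt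
        have := hcontF v hv
        fun_prop
    _ = n * ε / 3 + (1 / t) * ((c - 1) + Real.exp (t * (n * b) - c + t * Real.log ‖v‖) *
        ∫ g, Real.exp (-(t * Real.log ‖glCLM g v‖)) ∂(mconvN μ n)) := by
        rw [← hμ.integral_affine (hcontF v hv), ← hμ.integral_affine]
        have := hcontF v hv
        fun_prop
    _ ≤ n * ε / 3 + (1 / t) * ((c - 1) + Real.exp (t * (n * b) - c + t * Real.log ‖v‖) *
        ((Real.exp (q * (t ^ 2 * R ^ 2)) * Real.exp (-(t * (n * b)))) *
          Real.exp (-(t * Real.log ‖v‖)))) := by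
        gcongr
        exact h1.trans (by gcongr)
    _ = n * ε / 3 + (1 / t) * ((c - 1) + Real.exp (-1)) := by
        rw [← Real.exp_add, ← Real.exp_add, ← Real.exp_add]
        congr 5
        rw [hc]; ring
    _ ≤ n * ε / 3 + (1 / t) * ((c - 1) + 1) := by
        gcongr
        rw [Real.exp_le_one_iff]; norm_num
    _ = n * ε / 3 + q * (t * R ^ 2) + 1 / t := by
        rw [hc]; field_simp; ring
    _ ≤ n * ε / 3 + q * (N * ε / 3) + q * N * ε / 3 := by gcongr
    _ = ε * n := by rw [hnc]; ring


/-! ### Part D: the slow subspace, and `L₁ ≤ β` -/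

/-- expected positive excess growth -/
def pF (μ : Measure (GLd d)) (β : ℝ) (n : ℕ) (v : Ed d) : ℝ :=
  ∫ g, Real.posLog (‖glCLM g v‖ * Real.exp (-(n * β))) ∂(mconvN μ n)

lemma cont_posLog (c : ℝ) (v : Ed d) :
    Continuous fun g : GLd d => Real.posLog (‖glCLM g v‖ * c) :=
  Real.continuous_posLog.comp (by fun_prop)

lemma pF_nonneg (μ : Measure (GLd d)) (β : ℝ) (n : ℕ) (v : Ed d) : 0 ≤ pF μ β n v :=
  integral_nonneg fun _ => Real.posLog_nonneg

lemma CptProb.pF_add {μ : Measure (GLd d)} (hμ : CptProb μ) (β : ℝ) (n : ℕ) (v w : Ed d) :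
    pF μ β n (v + w) ≤ Real.log 2 + (pF μ β n v + pF μ β n w) := by
  have := hμ.prob
  rw [pF, pF, pF, ← MeasureTheory.integral_add (hμ.integrable n (cont_posLog _ _))
    (hμ.integrable n (cont_posLog _ _))]
  have h1 := hμ.integral_affine (n := n) ((cont_posLog (Real.exp (-(n * β))) v).add
    (cont_posLog (Real.exp (-(n * β))) w)) (Real.log 2) 1
  simp only [one_mul, Pi.add_apply] at h1
  rw [← h1]
  refine integral_mono (hμ.integrable n (cont_posLog _ _)) (hμ.integrable n ?_) fun g => ?_
  · exact continuous_const.add ((cont_posLog _ _).add (cont_posLog _ _))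
  · have : ‖glCLM g (v + w)‖ * Real.exp (-(n * β)) ≤
        ‖glCLM g v‖ * Real.exp (-(n * β)) + ‖glCLM g w‖ * Real.exp (-(n * β)) := by
      rw [← add_mul, map_add]
      gcongr
      exact norm_add_le _ _
    refine (Real.posLog_le_posLog (by positivity) this).trans (Real.posLog_add.trans ?_)
    rw [add_assoc]

lemma CptProb.pF_smul {μ : Measure (GLd d)} (hμ : CptProb μ) (β : ℝ) (n : ℕ) (c : ℝ) (v : Ed d) :
    pF μ β n (c • v) ≤ Real.posLog ‖c‖ + pF μ β n v := by
  have := hμ.prob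
  have h1 := hμ.integral_affine (n := n) (cont_posLog (Real.exp (-(n * β))) v)
    (Real.posLog ‖c‖) 1
  simp only [one_mul] at h1
  rw [pF, pF, ← h1]
  refine integral_mono (hμ.integrable n (cont_posLog _ _)) (hμ.integrable n ?_) fun g => ?_
  · exact continuous_const.add (cont_posLog _ _)
  · show Real.posLog _ ≤ _
    rw [map_smul, norm_smul, mul_assoc]
    exact Real.posLog_mul

lemma CptProb.pF_step {μ : Measure (GLd d)} (hμ : CptProb μ) (β : ℝ) :
    ∃ C : ℝ, ∀ n v, Integrable (fun h => pF μ β n (glCLM h v)) μ ∧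
      ∫ h, pF μ β n (glCLM h v) ∂μ ≤ pF μ β n v + C := by
  have := hμ.prob
  obtain ⟨M, hM, hb⟩ := hμ.bound
  refine ⟨Real.posLog M, fun n v => ?_⟩
  have hF := cont_posLog (Real.exp (-(n * β))) v
  have e1 := hμ.integral_add n 1 hF
  have e2 := hμ.integrable_inner n 1 hF
  have e3 := hμ.integral_add 1 n hF
  rw [mconvN_one] at e1 e2
  simp only [glCLM_mul_apply] at e1 e2
  refine ⟨e2, ?_⟩
  show ∫ h, (∫ g, Real.posLog (‖glCLM g (glCLM h v)‖ * Real.exp (-(n * β))) ∂(mconvN μ n)) ∂μ ≤ _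
  rw [← e1, add_comm n 1, e3]
  have h1 := hμ.integral_affine (n := n) hF (Real.posLog M) 1
  simp only [one_mul] at h1
  rw [pF, add_comm, ← h1]
  refine integral_mono (hμ.integrable_inner 1 n hF) (hμ.integrable n
    (continuous_const.add hF)) fun h => ?_
  show ∫ g, Real.posLog (‖glCLM (g * h) v‖ * Real.exp (-(n * β))) ∂(mconvN μ 1) ≤
    Real.posLog M + Real.posLog (‖glCLM h v‖ * Real.exp (-(n * β)))
  have hcont : Continuous fun g : GLd d =>
      Real.posLog (‖glCLM (g * h) v‖ * Real.exp (-(n * β))) :=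
    hF.comp (continuous_mul_const h)
  calc _ ≤ ∫ g, (Real.posLog M + Real.posLog (‖glCLM h v‖ * Real.exp (-(n * β))))
        ∂(mconvN μ 1) := by
        refine integral_mono_ae (hμ.integrable 1 hcont) (integrable_const _) ?_
        filter_upwards [hb 1] with g hg
        have h3 := (hg (glCLM h v)).1
        rw [pow_one] at h3
        show Real.posLog (‖glCLM (g * h) v‖ * Real.exp (-(n * β))) ≤ _
        rw [glCLM_mul_apply]
        refine le_trans (Real.posLog_le_posLog (by positivity)
          (mul_le_mul_of_nonneg_right h3 (Real.exp_pos _).le)) ?_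
        rw [mul_assoc]
        exact Real.posLog_mul
    _ = _ := by simp

/-- vectors with slow growth along a sequence of times -/
def slow {μ : Measure (GLd d)} (hμ : CptProb μ) (β : ℝ) (s : ℕ → ℕ)
    (hs : Tendsto s atTop atTop) : Submodule ℝ (Ed d) where
  carrier := {v | Tendsto (fun i => pF μ β (s i) v / (s i : ℝ)) atTop (𝓝 0)}
  zero_mem' := by
    have h0 : ∀ n, pF μ β n 0 = 0 := fun n => by simp [pF]
    simp [h0]
  add_mem' := by
    intro v w hv hw
    have hs' : Tendsto (fun i => Real.log 2 / (s i : ℝ)) atTop (𝓝 0) :=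
      tendsto_const_nhds.div_atTop (tendsto_natCast_atTop_atTop.comp hs)
    have h2 : Tendsto (fun i => Real.log 2 / (s i : ℝ) + (pF μ β (s i) v / (s i : ℝ) +
        pF μ β (s i) w / (s i : ℝ))) atTop (𝓝 (0 + (0 + 0))) := hs'.add (hv.add hw)
    simp only [add_zero] at h2
    refine squeeze_zero (fun i => div_nonneg (pF_nonneg _ _ _ _) (Nat.cast_nonneg _))
      (fun i => ?_) h2
    rw [← add_div, ← add_div]
    gcongr
    exact hμ.pF_add β (s i) v w
  smul_mem' := by
    intro c v hv
    have hs' : Tendsto (fun i => Real.posLog ‖c‖ / (s i : ℝ)) atTop (𝓝 0) :=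
      tendsto_const_nhds.div_atTop (tendsto_natCast_atTop_atTop.comp hs)
    have h2 : Tendsto (fun i => Real.posLog ‖c‖ / (s i : ℝ) + pF μ β (s i) v / (s i : ℝ))
        atTop (𝓝 (0 + 0)) := hs'.add hv
    simp only [add_zero] at h2
    refine squeeze_zero (fun i => div_nonneg (pF_nonneg _ _ _ _) (Nat.cast_nonneg _))
      (fun i => ?_) h2
    rw [← add_div]
    gcongr
    exact hμ.pF_smul β (s i) c v

lemma mem_slow {μ : Measure (GLd d)} (hμ : CptProb μ) (β : ℝ) (s : ℕ → ℕ)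
    (hs : Tendsto s atTop atTop) (v : Ed d) :
    v ∈ slow hμ β s hs ↔ Tendsto (fun i => pF μ β (s i) v / (s i : ℝ)) atTop (𝓝 0) := Iff.rfl

lemma slow_sub {μ : Measure (GLd d)} (hμ : CptProb μ) (β : ℝ) (s : ℕ → ℕ)
    (hs : Tendsto s atTop atTop) (r : ℕ → ℕ) (hr : Tendsto r atTop atTop) :
    slow hμ β s hs ≤ slow hμ β (s ∘ r) (hs.comp hr) := by
  intro v hv
  rw [mem_slow] at hv ⊢
  exact hv.comp hr

lemma slow_step {μ : Measure (GLd d)} (hμ : CptProb μ) (β : ℝ) (s : ℕ → ℕ)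
    (hs : Tendsto s atTop atTop) {v : Ed d} (hv : v ∈ slow hμ β s hs) :
    ∃ r : ℕ → ℕ, ∃ hr : Tendsto r atTop atTop, ∀ᵐ h ∂μ,
      glCLM h v ∈ slow hμ β (s ∘ r) (hs.comp hr) := by
  have := hμ.prob
  obtain ⟨C, hC⟩ := hμ.pF_step β
  set f : ℕ → GLd d → ℝ := fun i h => pF μ β (s i) (glCLM h v) / (s i : ℝ) with hf
  have hfi : ∀ i, Integrable (f i) μ := fun i => (hC (s i) v).1.div_const _
  have hf0 : ∀ i h, 0 ≤ f i h := fun i h =>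
    div_nonneg (pF_nonneg _ _ _ _) (Nat.cast_nonneg _)
  have hInteg : Tendsto (fun i => ∫ h, f i h ∂μ) atTop (𝓝 0) := by
    have hs' : Tendsto (fun i => C / (s i : ℝ)) atTop (𝓝 0) :=
      tendsto_const_nhds.div_atTop (tendsto_natCast_atTop_atTop.comp hs)
    have h2 : Tendsto (fun i => pF μ β (s i) v / (s i : ℝ) + C / (s i : ℝ))
        atTop (𝓝 (0 + 0)) := ((mem_slow _ _ _ _ _).1 hv).add hs'
    simp only [add_zero] at h2
    refine squeeze_zero (fun i => integral_nonneg (hf0 i)) (fun i => ?_) h2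
    rw [hf]
    simp only
    rw [integral_div, ← add_div]
    gcongr
    exact (hC (s i) v).2
  have hm : TendstoInMeasure μ f atTop (fun _ => (0 : ℝ)) := by
    refine tendstoInMeasure_of_tendsto_eLpNorm (p := 1) one_ne_zero
      (fun i => (hfi i).aestronglyMeasurable) aestronglyMeasurable_const ?_
    have : ∀ i, eLpNorm (f i - fun _ => (0 : ℝ)) 1 μ = ENNReal.ofReal (∫ h, f i h ∂μ) := by
      intro i
      have h0 : (f i - fun _ => (0 : ℝ)) = f i := by ext; simp
      rw [h0, eLpNorm_one_eq_lintegral_enorm, ← ofReal_integral_norm_eq_lintegral_enorm (hfi i)]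
      congr 2
      ext h
      exact Real.norm_of_nonneg (hf0 i h)
    simp_rw [this]
    simpa using ENNReal.tendsto_ofReal hInteg
  obtain ⟨r, hr, hae⟩ := hm.exists_seq_tendsto_ae
  refine ⟨r, hr.tendsto_atTop, ?_⟩
  filter_upwards [hae] with h hh
  rw [mem_slow]
  exact hh

lemma map_eq_of_le (g : GLd d) (V : Submodule ℝ (Ed d))
    (h : V.map (glCLM g).toLinearMap ≤ V) : V.map (glCLM g).toLinearMap = V := by
  apply Submodule.eq_of_le_of_finrank_eq h
  exact (Submodule.equivMapOfInjective _ (glLinear_injective g) V).finrank_eq.symm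

lemma exists_slow_inv {μ : Measure (GLd d)} (hμ : CptProb μ) (β : ℝ) (s : ℕ → ℕ)
    (hs : Tendsto s atTop atTop) {v₀ : Ed d} (hv₀ : v₀ ≠ 0) (hv : v₀ ∈ slow hμ β s hs) :
    ∃ s' : ℕ → ℕ, ∃ hs' : Tendsto s' atTop atTop, slow hμ β s' hs' ≠ ⊥ ∧
      ∀ᵐ g ∂μ, (slow hμ β s' hs').map (glCLM g).toLinearMap = slow hμ β s' hs' := by
  have := hμ.prob
  obtain ⟨V, ⟨s', hs', hle, rfl⟩, hmax⟩ := (wellFounded_gt (α := Submodule ℝ (Ed d))).has_min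
    {V | ∃ s' : ℕ → ℕ, ∃ hs' : Tendsto s' atTop atTop, slow hμ β s hs ≤ slow hμ β s' hs' ∧
      V = slow hμ β s' hs'} ⟨_, s, hs, le_rfl, rfl⟩
  refine ⟨s', hs', ?_, ?_⟩
  · intro h
    have := hle hv
    rw [h, Submodule.mem_bot] at this
    exact hv₀ this
  · set V := slow hμ β s' hs' with hV
    have h1 : ∀ v ∈ V, ∀ᵐ g ∂μ, glCLM g v ∈ V := by
      intro v hv
      obtain ⟨r, hr, hae⟩ := slow_step hμ β s' hs' hv
      have hVle : V ≤ slow hμ β (s' ∘ r) (hs'.comp hr) := slow_sub hμ β s' hs' r hr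
      have hEq : V = slow hμ β (s' ∘ r) (hs'.comp hr) := by
        by_contra hne
        exact hmax _ ⟨_, hs'.comp hr, hle.trans hVle, rfl⟩ (lt_of_le_of_ne hVle hne)
      rw [hEq]
      exact hae
    have h2 : ∀ᵐ g ∂μ, ∀ i, glCLM g ((stdOrthonormalBasis ℝ V) i : Ed d) ∈ V := by
      rw [ae_all_iff]
      exact fun i => h1 _ (Subtype.mem _)
    filter_upwards [h2] with g hg
    apply map_eq_of_le
    rintro _ ⟨x, hx, rfl⟩
    have h3 := (stdOrthonormalBasis ℝ V).sum_repr ⟨x, hx⟩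
    have h4 := congrArg Subtype.val h3
    simp only [AddSubmonoidClass.coe_finsetSum, Submodule.coe_smul] at h4
    rw [← h4]
    show glCLM g _ ∈ V
    rw [map_sum]
    refine V.sum_mem fun i _ => ?_
    rw [map_smul]
    exact V.smul_mem _ (hg i)

/-- norm of restriction -/
def rN (V : Submodule ℝ (Ed d)) (g : GLd d) : ℝ := ‖(glCLM g).comp V.subtypeL‖

lemma rN_eq (V : Submodule ℝ (Ed d)) (g : GLd d) :
    ‖LinearMap.toContinuousLinearMap ((glCLM g).toLinearMap.domRestrict V)‖ = rN V g := by
  rw [rN]; rfl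

lemma rN_top (g : GLd d) : rN ⊤ g = gnorm g := by
  rw [rN, gnorm]
  apply le_antisymm
  · refine ContinuousLinearMap.opNorm_le_bound _ (ContinuousLinearMap.opNorm_nonneg _) fun x => ?_
    exact (glCLM g).le_opNorm x
  · refine ContinuousLinearMap.opNorm_le_bound _ (ContinuousLinearMap.opNorm_nonneg _) fun x => ?_
    exact ((glCLM g).comp (⊤ : Submodule ℝ (Ed d)).subtypeL).le_opNorm ⟨x, trivial⟩

lemma L1_eq (μ : Measure (GLd d)) : L1 μ = L1rest μ ⊤ := by
  rw [L1, L1rest]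
  simp only [rN_eq, rN_top]

lemma rN_ge (V : Submodule ℝ (Ed d)) (g : GLd d) {v : Ed d} (hv : v ∈ V) :
    ‖glCLM g v‖ ≤ rN V g * ‖v‖ :=
  ((glCLM g).comp V.subtypeL).le_opNorm ⟨v, hv⟩

lemma rN_pos {V : Submodule ℝ (Ed d)} (hV : V ≠ ⊥) (g : GLd d) : 0 < rN V g := by
  obtain ⟨v, hv, hv0⟩ := V.ne_bot_iff.1 hV
  have h1 := rN_ge V g hv
  have h2 : 0 < ‖glCLM g v‖ := norm_pos_iff.2 (glCLM_ne_zero g hv0)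
  have h3 : 0 < ‖v‖ := norm_pos_iff.2 hv0
  by_contra h
  push Not at h
  nlinarith

lemma cont_rN {V : Submodule ℝ (Ed d)} (hV : V ≠ ⊥) :
    Continuous fun g : GLd d => Real.log (rN V g) := by
  refine Continuous.log ?_ fun g => (rN_pos hV g).ne'
  exact (continuous_glCLM.clm_comp continuous_const).norm

lemma CptProb.L1rest_tendsto {μ : Measure (GLd d)} (hμ : CptProb μ) {V : Submodule ℝ (Ed d)}
    (hV : V ≠ ⊥) (hinv : ∀ᵐ g ∂μ, V.map (glCLM g).toLinearMap = V) :
    Tendsto (fun n : ℕ => (∫ g, Real.log (rN V g) ∂(mconvN μ n)) / n) atTop (𝓝 (L1rest μ V)) := by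
  have := hμ.prob
  obtain ⟨R, hR0, hR⟩ := hμ.logbound
  have hinvN : ∀ n, ∀ᵐ g ∂(mconvN μ n), ∀ v ∈ V, glCLM g v ∈ V := by
    intro n
    induction n with
    | zero =>
      rw [mconvN, ae_dirac_eq]
      intro v hv
      rwa [glCLM_one_apply]
    | succ n ih =>
      rw [mconvN_succ]
      refine ae_mconv ih hinv ?_ ?_
      · intro g h hg hh v hv
        rw [glCLM_mul_apply]
        apply hg
        rw [← hh]
        exact ⟨v, hv, rfl⟩
      · apply IsClosed.measurableSet
        simp only [Set.ofPred_forall]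
        refine isClosed_iInter fun v => isClosed_iInter fun _ => ?_
        have hc : IsClosed (V : Set (Ed d)) := V.closed_of_finiteDimensional
        exact hc.preimage (f := fun g : GLd d => glCLM g v) (by fun_prop)
  have hsub : Subadditive fun n => ∫ g, Real.log (rN V g) ∂(mconvN μ n) := by
    intro m n
    beta_reduce
    rw [hμ.integral_add m n (cont_rN hV)]
    calc _ ≤ ∫ h, ((∫ g, Real.log (rN V g) ∂(mconvN μ m)) + 1 * Real.log (rN V h))
          ∂(mconvN μ n) := by
          refine integral_mono_ae (hμ.integrable_inner m n (cont_rN hV)) (hμ.integrable n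
            (continuous_const.add (continuous_const.mul (cont_rN hV)))) ?_
          filter_upwards [hinvN n] with h hh
          have h1 := hμ.integral_affine (n := m) (cont_rN hV) (1 * Real.log (rN V h)) 1
          simp only [one_mul] at h1
          rw [one_mul, add_comm, ← h1]
          refine integral_mono (hμ.integrable m ((cont_rN hV).comp (continuous_mul_const h)))
            (hμ.integrable m (continuous_const.add (cont_rN hV))) fun g => ?_
          show Real.log (rN V (g * h)) ≤ Real.log (rN V h) + Real.log (rN V g)
          rw [← Real.log_mul (rN_pos hV h).ne' (rN_pos hV g).ne']
          apply Real.log_le_log (rN_pos hV _)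
          refine ContinuousLinearMap.opNorm_le_bound _
            (mul_nonneg (rN_pos hV _).le (rN_pos hV _).le) fun x => ?_
          show ‖glCLM (g * h) x‖ ≤ _
          rw [glCLM_mul_apply]
          have e1 := rN_ge V g (hh x x.2)
          have e2 := rN_ge V h x.2
          have e3 := mul_le_mul_of_nonneg_left e2 (rN_pos hV g).le
          calc _ ≤ _ := e1
            _ ≤ _ := e3
            _ = _ := by rw [Submodule.coe_norm]; ring
      _ = _ := hμ.integral_affine (cont_rN hV) _ _
      _ = _ := by ring
  have hbd : BddBelow (Set.range fun n : ℕ => (∫ g, Real.log (rN V g) ∂(mconvN μ n)) / n) := by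
    refine ⟨-R, ?_⟩
    rintro _ ⟨n, rfl⟩
    rcases Nat.eq_zero_or_pos n with rfl | hn
    · simpa using hR0
    · have h2 : (0 : ℝ) < n := by exact_mod_cast hn
      show -R ≤ _ / _
      rw [le_div_iff₀ h2]
      obtain ⟨v, hv, hv0⟩ := V.ne_bot_iff.1 hV
      calc -R * n = ∫ g, -R * n ∂(mconvN μ n) := by simp
        _ ≤ _ := by
          refine integral_mono_ae (integrable_const _) (hμ.integrable n (cont_rN hV)) ?_
          filter_upwards [hR n] with g hg
          have h3 := (abs_le.1 (hg v hv0)).1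
          have h4 := Real.log_le_log (norm_pos_iff.2 (glCLM_ne_zero g hv0)) (rN_ge V g hv)
          rw [Real.log_mul (rN_pos hV g).ne' (norm_ne_zero_iff.2 hv0)] at h4
          linarith
  have hl := hsub.tendsto_lim hbd
  have : L1rest μ V = hsub.lim := by
    rw [L1rest]
    apply Tendsto.limUnder_eq
    simp only [rN_eq]
    refine hl.congr fun n => ?_
    rw [div_eq_inv_mul]
  rwa [this]

lemma CptProb.L1rest_le {μ : Measure (GLd d)} (hμ : CptProb μ) {β : ℝ} {s : ℕ → ℕ}
    {hs : Tendsto s atTop atTop} (hV : slow hμ β s hs ≠ ⊥)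
    (hinv : ∀ᵐ g ∂μ, (slow hμ β s hs).map (glCLM g).toLinearMap = slow hμ β s hs) :
    L1rest μ (slow hμ β s hs) ≤ β := by
  have := hμ.prob
  have h1 := (hμ.L1rest_tendsto hV hinv).comp hs
  set V := slow hμ β s hs with hVdef
  set b := stdOrthonormalBasis ℝ V with hb
  set ι := Fin (Module.finrank ℝ V)
  have hbd : ∀ n : ℕ, ∫ g, Real.log (rN V g) ∂(mconvN μ n) ≤
      n * β + Real.log (Fintype.card ι) + ∑ i : ι, pF μ β n (b i) := by
    intro n
    have hc : ∀ i ∈ (Finset.univ : Finset ι), Integrable (fun g : GLd d => Real.posLog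
        (‖glCLM g (b i)‖ * Real.exp (-(n * β)))) (mconvN μ n) := fun i _ =>
      hμ.integrable n (cont_posLog _ _)
    have hcs : Continuous fun g : GLd d => ∑ i : ι, Real.posLog
        (‖glCLM g (b i)‖ * Real.exp (-(n * β))) :=
      continuous_finsetSum _ fun i _ => cont_posLog _ _
    have e1 := hμ.integral_affine (n := n) hcs (n * β + Real.log (Fintype.card ι)) 1
    simp only [one_mul] at e1
    simp only [pF]
    rw [← integral_finsetSum _ hc, ← e1]
    refine integral_mono (hμ.integrable n (cont_rN hV)) (hμ.integrable n
      (continuous_const.add hcs)) fun g => ?_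
    show Real.log (rN V g) ≤ n * β + Real.log (Fintype.card ι) +
      ∑ i : ι, Real.posLog (‖glCLM g (b i)‖ * Real.exp (-(n * β)))
    have e2 : rN V g ≤ ∑ i : ι, ‖glCLM g (b i)‖ := by
      refine ContinuousLinearMap.opNorm_le_bound _
        (Finset.sum_nonneg fun i _ => norm_nonneg _) fun x => ?_
      have h4 := congrArg (fun y : V => glCLM g (y : Ed d)) (b.sum_repr x)
      simp only [AddSubmonoidClass.coe_finsetSum, Submodule.coe_smul, map_sum, map_smul] at h4
      show ‖glCLM g x‖ ≤ _
      rw [← h4, Finset.sum_mul]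
      refine (norm_sum_le _ _).trans (Finset.sum_le_sum fun i _ => ?_)
      rw [norm_smul, mul_comm]
      gcongr
      rw [b.repr_apply_apply]
      refine (norm_inner_le_norm _ _).trans ?_
      rw [b.orthonormal.1 i, one_mul]
    have e3 : Real.log (rN V g) = n * β + Real.log (rN V g * Real.exp (-(n * β))) := by
      rw [Real.log_mul (rN_pos hV g).ne' (Real.exp_pos _).ne', Real.log_exp]; ring
    rw [e3, add_assoc]
    gcongr
    calc _ ≤ Real.posLog (rN V g * Real.exp (-(n * β))) := le_max_right _ _
      _ ≤ Real.posLog (∑ i : ι, ‖glCLM g (b i)‖ * Real.exp (-(n * β))) := by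
        rw [← Finset.sum_mul]
        apply Real.posLog_le_posLog (mul_nonneg (rN_pos hV g).le (Real.exp_pos _).le)
        gcongr
      _ ≤ _ := by
        have := Real.posLog_sum Finset.univ
          (fun i : ι => ‖glCLM g (b i)‖ * Real.exp (-(n * β)))
        simpa using this
  have h2 : Tendsto (fun i => β + Real.log (Fintype.card ι) / (s i : ℝ) +
      ∑ j : ι, pF μ β (s i) (b j) / (s i : ℝ)) atTop (𝓝 (β + 0 + ∑ j : ι, 0)) := by
    refine Tendsto.add (Tendsto.add tendsto_const_nhds
      (tendsto_const_nhds.div_atTop (tendsto_natCast_atTop_atTop.comp hs))) ?_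
    refine tendsto_finsetSum _ fun j _ => ?_
    have : ((b j : V) : Ed d) ∈ slow hμ β s hs := (b j).2
    exact (mem_slow _ _ _ _ _).1 this
  simp only [Finset.sum_const_zero, add_zero] at h2
  refine le_of_tendsto_of_tendsto h1 h2 ?_
  filter_upwards [hs.eventually_ge_atTop 1] with i hi
  have h0 : (0 : ℝ) < s i := by exact_mod_cast hi
  show _ / _ ≤ _
  rw [div_le_iff₀ h0, ← Finset.sum_div]
  refine (hbd (s i)).trans (le_of_eq ?_)
  field_simp

lemma CptProb.L1_le {μ : Measure (GLd d)} (hμ : CptProb μ) (hqi : QuasiIrreducible μ)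
    {β : ℝ} {m : ℕ → ℝ} (hm : ∀ n w, w ≠ 0 → m n ≤ aF μ n w)
    (hlim : Tendsto (fun n : ℕ => m n / n) atTop (𝓝 β)) {v₀ : Ed d} (hv₀ : v₀ ≠ 0)
    (hv : ∀ k : ℕ, aF μ k v₀ ≤ k * β) : L1 μ ≤ β := by
  have := hμ.prob
  have hch : ∀ i : ℕ, ∃ n, i ≤ n ∧ 1 ≤ n ∧ ∀ v : Ed d, v ≠ 0 →
      ∫ g, max 0 (-(Real.log ‖glCLM g v‖ - Real.log ‖v‖ - n * β)) ∂(mconvN μ n) ≤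
        (1 / ((i : ℝ) + 1)) * n := fun i =>
    hμ.lower_tail hm hlim (by positivity) i
  choose s hs1 hs2 hs3 using hch
  have hs : Tendsto s atTop atTop := tendsto_atTop_mono hs1 tendsto_id
  have hmem : v₀ ∈ slow hμ β s hs := by
    rw [mem_slow]
    have h2 : Tendsto (fun i : ℕ => Real.posLog ‖v₀‖ / (s i : ℝ) + 1 / ((i : ℝ) + 1)) atTop
        (𝓝 (0 + 0)) :=
      (tendsto_const_nhds.div_atTop (tendsto_natCast_atTop_atTop.comp hs)).add
        tendsto_one_div_add_atTop_nhds_zero_nat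
    simp only [add_zero] at h2
    refine squeeze_zero (fun i => div_nonneg (pF_nonneg _ _ _ _) (Nat.cast_nonneg _))
      (fun i => ?_) h2
    have hn0 : (0 : ℝ) < s i := by exact_mod_cast hs2 i
    set n := s i with hn
    have hX : Continuous fun g : GLd d => Real.log ‖glCLM g v₀‖ - Real.log ‖v₀‖ :=
      (cont_log_norm hv₀).sub continuous_const
    have hX' : Continuous fun g : GLd d => Real.log ‖glCLM g v₀‖ - Real.log ‖v₀‖ - n * β :=
      hX.sub continuous_const
    have hX2 : Continuous fun g : GLd d =>
        max 0 (-(Real.log ‖glCLM g v₀‖ - Real.log ‖v₀‖ - n * β)) :=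
      continuous_const.max hX'.neg
    have h3 : pF μ β n v₀ ≤ Real.posLog ‖v₀‖ + (1 / ((i : ℝ) + 1)) * n := by
      calc pF μ β n v₀ ≤ ∫ g, ((Real.posLog ‖v₀‖ - n * β +
            1 * (Real.log ‖glCLM g v₀‖ - Real.log ‖v₀‖)) +
            max 0 (-(Real.log ‖glCLM g v₀‖ - Real.log ‖v₀‖ - n * β))) ∂(mconvN μ n) := by
            refine integral_mono (hμ.integrable n (cont_posLog _ _)) (hμ.integrable n
              (by fun_prop)) fun g => ?_
            show Real.posLog _ ≤ _
            have e0 : ‖v₀‖ ≠ 0 := norm_ne_zero_iff.2 hv₀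
            have e1 : ‖glCLM g v₀‖ * Real.exp (-(n * β)) =
              ‖v₀‖ * (‖glCLM g v₀‖ / ‖v₀‖ * Real.exp (-(n * β))) := by
              field_simp
            rw [e1]
            refine Real.posLog_mul.trans ?_
            have e2 : Real.posLog (‖glCLM g v₀‖ / ‖v₀‖ * Real.exp (-(n * β))) =
                max 0 (Real.log ‖glCLM g v₀‖ - Real.log ‖v₀‖ - n * β) := by
              rw [Real.posLog_apply, Real.log_mul (div_ne_zero (norm_ne_zero_iff.2
                (glCLM_ne_zero g hv₀)) e0) (Real.exp_pos _).ne', Real.log_exp,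
                Real.log_div (norm_ne_zero_iff.2 (glCLM_ne_zero g hv₀)) e0]
              rfl
            rw [e2]
            set x := Real.log ‖glCLM g v₀‖ - Real.log ‖v₀‖ - n * β with hx
            have e3 : max 0 x = x + max 0 (-x) := by
              rcases le_total 0 x with h | h
              · rw [max_eq_right h, max_eq_left (by linarith)]; ring
              · rw [max_eq_left h, max_eq_right (by linarith)]; ring
            rw [e3]
            linarith
        _ = (Real.posLog ‖v₀‖ - n * β + 1 * aF μ n v₀) +
            ∫ g, max 0 (-(Real.log ‖glCLM g v₀‖ - Real.log ‖v₀‖ - n * β)) ∂(mconvN μ n) := by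
            rw [MeasureTheory.integral_add (hμ.integrable n (by fun_prop)) (hμ.integrable n hX2),
              hμ.integral_affine hX]
            rfl
        _ ≤ _ := by
            have e4 := hv n
            have e5 := hs3 i v₀ hv₀
            linarith
    rw [div_le_iff₀ hn0]
    refine h3.trans (le_of_eq ?_)
    field_simp
  obtain ⟨s', hs', hne, hinv⟩ := exists_slow_inv hμ β s hs hv₀ hmem
  have hle := hμ.L1rest_le hne hinv
  by_cases htop : slow hμ β s' hs' = ⊤
  · rw [L1_eq, ← htop]; exact hle
  · by_contra hlt
    exact hqi ⟨_, hne, htop, hinv, hle.trans_lt (not_le.1 hlt)⟩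


/-! ### Part E: area growth -/

/-- area of the parallelogram spanned by `p` and `q` -/
def wg (p q : Ed d) : ℝ := Real.sqrt (‖p‖ ^ 2 * ‖q‖ ^ 2 - (inner ℝ p q : ℝ) ^ 2)

lemma wg_nonneg (p q : Ed d) : 0 ≤ wg p q := Real.sqrt_nonneg _

lemma wg_rad_nonneg (p q : Ed d) : 0 ≤ ‖p‖ ^ 2 * ‖q‖ ^ 2 - (inner ℝ p q : ℝ) ^ 2 := by
  have h := abs_real_inner_le_norm p q
  have h2 : (inner ℝ p q : ℝ) ^ 2 ≤ (‖p‖ * ‖q‖) ^ 2 := sq_le_sq.2 (h.trans (le_abs_self _))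
  rw [mul_pow] at h2
  linarith

lemma wg_symm (p q : Ed d) : wg p q = wg q p := by
  rw [wg, wg, real_inner_comm, mul_comm]

lemma wg_smul_left (c : ℝ) (p q : Ed d) : wg (c • p) q = |c| * wg p q := by
  rw [wg, wg, norm_smul, real_inner_smul_left, ← Real.sqrt_sq_eq_abs, ← Real.sqrt_mul (sq_nonneg c),
    Real.norm_eq_abs, mul_pow, sq_abs]
  congr 1
  ring

lemma wg_smul_right (c : ℝ) (p q : Ed d) : wg p (c • q) = |c| * wg p q := by
  rw [wg_symm, wg_smul_left, wg_symm]

lemma wg_add_smul (c : ℝ) (p q : Ed d) : wg p (q + c • p) = wg p q := by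
  rw [wg, wg]
  congr 1
  have h1 : ‖q + c • p‖ ^ 2 = ‖q‖ ^ 2 + 2 * (c * inner ℝ p q) + c ^ 2 * ‖p‖ ^ 2 := by
    rw [norm_add_sq_real, real_inner_smul_right, real_inner_comm, norm_smul, mul_pow,
      Real.norm_eq_abs, sq_abs]
  rw [h1, inner_add_right, real_inner_smul_right, real_inner_self_eq_norm_sq]
  ring

lemma wg_le (p q : Ed d) : wg p q ≤ ‖p‖ * ‖q‖ := by
  rw [wg]
  apply Real.sqrt_le_iff.2
  refine ⟨by positivity, ?_⟩
  nlinarith [sq_nonneg (inner ℝ p q : ℝ)]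

lemma wg_orth {p q : Ed d} (h : (inner ℝ p q : ℝ) = 0) : wg p q = ‖p‖ * ‖q‖ := by
  rw [wg, h, ← mul_pow]
  simp [Real.sqrt_sq (mul_nonneg (norm_nonneg p) (norm_nonneg q))]

@[fun_prop]
lemma continuous_wg {X : Type*} [TopologicalSpace X] {f g : X → Ed d} (hf : Continuous f)
    (hg : Continuous g) : Continuous fun x => wg (f x) (g x) := by
  unfold wg
  fun_prop

lemma wg_map_le (A : Ed d →L[ℝ] Ed d) {c : ℝ}
    (h : ∀ p q : Ed d, ‖p‖ = 1 → ‖q‖ = 1 → (inner ℝ p q : ℝ) = 0 → wg (A p) (A q) ≤ c)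
    (p q : Ed d) : wg (A p) (A q) ≤ c * wg p q := by
  rcases eq_or_ne p 0 with rfl | hp
  · simp [wg]
  have hp' : ‖p‖ ≠ 0 := norm_ne_zero_iff.2 hp
  obtain ⟨t, r, hqr, hor⟩ : ∃ (t : ℝ) (r : Ed d), q = r + t • p ∧ (inner ℝ p r : ℝ) = 0 := by
    refine ⟨inner ℝ p q / ‖p‖ ^ 2, q - (inner ℝ p q / ‖p‖ ^ 2) • p, by simp, ?_⟩
    rw [inner_sub_right, real_inner_smul_right, real_inner_self_eq_norm_sq]
    field_simp
    ring
  rw [hqr, map_add, map_smul, wg_add_smul, wg_add_smul]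
  rcases eq_or_ne r 0 with rfl | hr
  · simp [wg]
  have hr' : ‖r‖ ≠ 0 := norm_ne_zero_iff.2 hr
  have e1 : p = ‖p‖ • (‖p‖⁻¹ • p) := by rw [smul_smul, mul_inv_cancel₀ hp', one_smul]
  have e2 : r = ‖r‖ • (‖r‖⁻¹ • r) := by rw [smul_smul, mul_inv_cancel₀ hr', one_smul]
  have h3 := h (‖p‖⁻¹ • p) (‖r‖⁻¹ • r) (by rw [norm_smul, norm_inv, norm_norm]; field_simp)
    (by rw [norm_smul, norm_inv, norm_norm]; field_simp)
    (by rw [real_inner_smul_left, real_inner_smul_right, hor]; simp)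
  have e3 : wg (A p) (A r) = ‖p‖ * ‖r‖ * wg (A (‖p‖⁻¹ • p)) (A (‖r‖⁻¹ • r)) := by
    conv_lhs => rw [e1, e2, map_smul A ‖p‖, map_smul A ‖r‖, wg_smul_left, wg_smul_right]
    rw [abs_norm, abs_norm, mul_assoc]
  rw [e3, wg_orth hor, mul_comm c]
  gcongr

/-- orthonormal pairs -/
def oP (d : ℕ) : Set (Ed d × Ed d) := {x | ‖x.1‖ = 1 ∧ ‖x.2‖ = 1 ∧ (inner ℝ x.1 x.2 : ℝ) = 0}

lemma oP_compact : IsCompact (oP d) := by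
  refine ((isCompact_sphere (0 : Ed d) 1).prod (isCompact_sphere (0 : Ed d) 1)).of_isClosed_subset
    ?_ ?_
  · simp only [oP, Set.ofPred_and]
    exact (isClosed_eq (by fun_prop) continuous_const).inter
      ((isClosed_eq (by fun_prop) continuous_const).inter
        (isClosed_eq (by fun_prop) continuous_const))
  · rintro x ⟨h1, h2, _⟩
    simp [h1, h2]

lemma N2_eq (g : GLd d) :
    N2 g = sSup ((fun x : Ed d × Ed d => wg (glCLM g x.1) (glCLM g x.2)) '' oP d) := by
  rw [N2]
  congr 1
  ext x
  constructor
  · rintro ⟨p, q, h1, h2, h3, rfl⟩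
    exact ⟨(p, q), ⟨h1, h2, h3⟩, rfl⟩
  · rintro ⟨⟨p, q⟩, ⟨h1, h2, h3⟩, rfl⟩
    exact ⟨p, q, h1, h2, h3, rfl⟩

lemma cont_N2 : Continuous (N2 : GLd d → ℝ) := by
  have h := (oP_compact (d := d)).continuous_sSup
    (f := fun (g : GLd d) (x : Ed d × Ed d) => wg (glCLM g x.1) (glCLM g x.2)) (by
      simp only [Function.HasUncurry.uncurry, id]
      fun_prop)
  exact h.congr fun g => (N2_eq g).symm

lemma wg_le_N2 (g : GLd d) (p q : Ed d) : wg (glCLM g p) (glCLM g q) ≤ N2 g * wg p q := by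
  refine wg_map_le _ (fun p q h1 h2 h3 => ?_) p q
  rw [N2_eq]
  refine le_csSup ?_ ⟨(p, q), ⟨h1, h2, h3⟩, rfl⟩
  exact oP_compact.bddAbove_image (by fun_prop)

lemma exists_oP (hd : 2 ≤ d) : ∃ p q : Ed d, ‖p‖ = 1 ∧ ‖q‖ = 1 ∧ (inner ℝ p q : ℝ) = 0 := by
  have h := (EuclideanSpace.basisFun (Fin d) ℝ).orthonormal
  refine ⟨_, _, h.1 ⟨0, by omega⟩, h.1 ⟨1, by omega⟩, h.2 ?_⟩
  simp

lemma wg_lower (g : GLd d) {M : ℝ} (hM : 0 ≤ M) (h : ∀ v, ‖v‖ ≤ M * ‖glCLM g v‖) (p q : Ed d) :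
    wg p q ≤ M ^ 2 * wg (glCLM g p) (glCLM g q) := by
  have hinv : ∀ v : Ed d, ‖glCLM g⁻¹ v‖ ≤ M * ‖v‖ := by
    intro v
    have := h (glCLM g⁻¹ v)
    rwa [← glCLM_mul_apply, mul_inv_cancel, glCLM_one_apply] at this
  have := wg_map_le (glCLM g⁻¹) (c := M ^ 2) (fun p q h1 h2 _ => ?_) (glCLM g p) (glCLM g q)
  · rwa [glCLM_leftInv, glCLM_leftInv] at this
  · refine (wg_le _ _).trans ?_
    have e1 := hinv p
    have e2 := hinv q
    rw [h1] at e1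
    rw [h2] at e2
    rw [sq]
    rw [mul_one] at e1 e2
    gcongr

lemma wg_upper (g : GLd d) {M : ℝ} (hM : 0 ≤ M) (h : ∀ v, ‖glCLM g v‖ ≤ M * ‖v‖) (p q : Ed d) :
    wg (glCLM g p) (glCLM g q) ≤ M ^ 2 * wg p q := by
  refine wg_map_le (glCLM g) (c := M ^ 2) (fun p q h1 h2 _ => ?_) p q
  refine (wg_le _ _).trans ?_
  have e1 := h p
  have e2 := h q
  rw [h1] at e1
  rw [h2] at e2
  rw [sq]
  rw [mul_one] at e1 e2
  gcongr

lemma glCLM_inv_bound (g : GLd d) (v : Ed d) : ‖v‖ ≤ ‖glCLM g⁻¹‖ * ‖glCLM g v‖ := by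
  have := (glCLM g⁻¹).le_opNorm (glCLM g v)
  rwa [glCLM_leftInv] at this

lemma wg_pos_gl (g : GLd d) {p q : Ed d} (h : 0 < wg p q) : 0 < wg (glCLM g p) (glCLM g q) := by
  have := wg_lower g (norm_nonneg _) (glCLM_inv_bound g) p q
  by_contra h2
  push Not at h2
  nlinarith [sq_nonneg ‖glCLM g⁻¹‖]

lemma N2_pos (hd : 2 ≤ d) (g : GLd d) : 0 < N2 g := by
  obtain ⟨p, q, h1, h2, h3⟩ := exists_oP hd
  have h4 : wg p q = 1 := by rw [wg_orth h3, h1, h2, one_mul]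
  have h5 := wg_le_N2 g p q
  have h6 := wg_pos_gl g (p := p) (q := q) (by rw [h4]; exact one_pos)
  rw [h4, mul_one] at h5
  linarith

lemma cont_log_N2 (hd : 2 ≤ d) : Continuous fun g : GLd d => Real.log (N2 g) :=
  cont_N2.log fun g => (N2_pos hd g).ne'

lemma N2_mul_le (g h : GLd d) : N2 (g * h) ≤ N2 g * N2 h := by
  have h0 : ∀ g : GLd d, 0 ≤ N2 g := fun g => by
    rw [N2_eq]
    apply Real.sSup_nonneg
    rintro _ ⟨x, _, rfl⟩
    exact wg_nonneg _ _
  rw [N2_eq (g * h)]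
  apply Real.sSup_le _ (mul_nonneg (h0 g) (h0 h))
  rintro _ ⟨⟨p, q⟩, ⟨h1, h2, h3⟩, rfl⟩
  simp only [glCLM_mul_apply]
  have h4 : wg p q = 1 := by
    rw [wg_orth h3]
    simp only at h1 h2
    rw [h1, h2, one_mul]
  have h5 := wg_le_N2 h p q
  rw [h4, mul_one] at h5
  exact (wg_le_N2 g _ _).trans (mul_le_mul_of_nonneg_left h5 (h0 g))

lemma CptProb.L12_tendsto (hd : 2 ≤ d) {μ : Measure (GLd d)} (hμ : CptProb μ) :
    Tendsto (fun n : ℕ => (∫ g, Real.log (N2 g) ∂(mconvN μ n)) / n) atTop (𝓝 (L12 μ)) := by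
  have := hμ.prob
  obtain ⟨M, hM, hb⟩ := hμ.bound
  have hM0 : 0 < M := by linarith
  have hN := cont_log_N2 hd
  have hsub : Subadditive fun n => ∫ g, Real.log (N2 g) ∂(mconvN μ n) := by
    intro m n
    beta_reduce
    rw [hμ.integral_add m n hN]
    calc _ ≤ ∫ h, ((∫ g, Real.log (N2 g) ∂(mconvN μ m)) + 1 * Real.log (N2 h))
          ∂(mconvN μ n) := by
          refine integral_mono (hμ.integrable_inner m n hN) (hμ.integrable n
            (continuous_const.add (continuous_const.mul hN))) fun h => ?_
          have h1 := hμ.integral_affine (n := m) hN (1 * Real.log (N2 h)) 1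
          simp only [one_mul] at h1
          beta_reduce
          rw [one_mul, add_comm, ← h1]
          refine integral_mono (hμ.integrable m (hN.comp (continuous_mul_const h)))
            (hμ.integrable m (continuous_const.add hN)) fun g => ?_
          show Real.log (N2 (g * h)) ≤ Real.log (N2 h) + Real.log (N2 g)
          rw [← Real.log_mul (N2_pos hd h).ne' (N2_pos hd g).ne', mul_comm]
          exact Real.log_le_log (N2_pos hd _) (N2_mul_le g h)
      _ = _ := hμ.integral_affine hN _ _
      _ = _ := by ring
  have hbd : BddBelow (Set.range fun n : ℕ => (∫ g, Real.log (N2 g) ∂(mconvN μ n)) / n) := by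
    refine ⟨-(2 * Real.log M), ?_⟩
    rintro _ ⟨n, rfl⟩
    rcases Nat.eq_zero_or_pos n with rfl | hn
    · simpa using Real.log_nonneg hM
    · have h2 : (0 : ℝ) < n := by exact_mod_cast hn
      show -(2 * Real.log M) ≤ _ / _
      rw [le_div_iff₀ h2]
      obtain ⟨p, q, h1, h2, h3⟩ := exists_oP hd
      have h4 : wg p q = 1 := by rw [wg_orth h3, h1, h2, one_mul]
      calc -(2 * Real.log M) * n = ∫ g, -(2 * Real.log M) * n ∂(mconvN μ n) := by simp
        _ ≤ _ := by
          refine integral_mono_ae (integrable_const _) (hμ.integrable n hN) ?_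
          filter_upwards [hb n] with g hg
          have h5 := wg_lower g (by positivity) (fun v => (hg v).2) p q
          have h6 := wg_le_N2 g p q
          rw [h4] at h5 h6
          have h7 : 1 ≤ (M ^ n) ^ 2 * N2 g := by
            refine h5.trans ?_
            gcongr
            linarith
          have h8 := Real.log_nonneg h7
          rw [Real.log_mul (by positivity) (N2_pos hd g).ne', Real.log_pow, Real.log_pow] at h8
          push_cast at h8
          linarith
  have hl := hsub.tendsto_lim hbd
  have : L12 μ = hsub.lim := by
    rw [L12]
    apply Tendsto.limUnder_eq
    refine hl.congr fun n => ?_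
    rw [div_eq_inv_mul]
  rwa [this]

/-! ### Part F: contraction of the projective distance on average -/

/-- logarithm of the projective distance of two vectors -/
def ld (v w : Ed d) : ℝ := Real.log (wg v w) - Real.log ‖v‖ - Real.log ‖w‖

lemma ne_zero_of_wg {v w : Ed d} (h : 0 < wg v w) : v ≠ 0 ∧ w ≠ 0 := by
  constructor
  · rintro rfl
    simp [wg] at h
  · rintro rfl
    simp [wg] at h

lemma cont_ld {v w : Ed d} (h : 0 < wg v w) :
    Continuous fun g : GLd d => ld (glCLM g v) (glCLM g w) := by
  unfold ld
  refine (Continuous.sub (Continuous.log (by fun_prop) fun g => (wg_pos_gl g h).ne')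
    (cont_log_norm (ne_zero_of_wg h).1)).sub (cont_log_norm (ne_zero_of_wg h).2)

lemma CptProb.ld_bound {μ : Measure (GLd d)} (hμ : CptProb μ) :
    ∃ R : ℝ, 0 ≤ R ∧ ∀ n : ℕ, ∀ᵐ g ∂(mconvN μ n), ∀ v w : Ed d, 0 < wg v w →
      |ld (glCLM g v) (glCLM g w) - ld v w| ≤ n * R := by
  obtain ⟨M, hM, hb⟩ := hμ.bound
  have hM0 : 0 < M := by linarith
  obtain ⟨R, hR0, hR⟩ := hμ.logbound
  refine ⟨2 * R + 2 * Real.log M, add_nonneg (by positivity)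
    (mul_nonneg zero_le_two (Real.log_nonneg hM)), fun n => ?_⟩
  filter_upwards [hb n, hR n] with g h1 h2 v w hvw
  have e1 := abs_le.1 (h2 v (ne_zero_of_wg hvw).1)
  have e2 := abs_le.1 (h2 w (ne_zero_of_wg hvw).2)
  have e3 := wg_lower g (by positivity) (fun v => (h1 v).2) v w
  have e4 := wg_upper g (by positivity) (fun v => (h1 v).1) v w
  have hp := wg_pos_gl g hvw
  have e5 := Real.log_le_log hvw e3
  have e6 := Real.log_le_log hp e4
  rw [Real.log_mul (by positivity) (by positivity), Real.log_pow, Real.log_pow] at e5 e6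
  push_cast at e5 e6
  rw [abs_le]
  unfold ld
  constructor <;> linarith

lemma CptProb.contraction (hd : 2 ≤ d) {μ : Measure (GLd d)} (hμ : CptProb μ)
    (hqi : QuasiIrreducible μ) (hgap : L2 μ < L1 μ) :
    ∃ α : ℝ, 0 < α ∧ α ≤ 1 ∧ ∃ s : ℝ, 0 < s ∧ ∃ C : ℝ, 0 < C ∧ ∀ n : ℕ, ∀ v w : Ed d, 0 < wg v w →
      ∫ g, Real.exp (α * ld (glCLM g v) (glCLM g w)) ∂(mconvN μ n) ≤
        C * Real.exp (-(s * n)) * Real.exp (α * ld v w) := by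
  have := hμ.prob
  obtain ⟨β, m, hm, hlim, v₀, hv₀, hv⟩ := hμ.min_growth hd
  have hL := hμ.L1_le hqi hm hlim hv₀ hv
  have hlim2 := (hμ.L12_tendsto hd).sub (hlim.const_mul 2)
  have hneg : L12 μ - 2 * β < 0 := by
    rw [L2] at hgap
    linarith
  obtain ⟨N, hN1, hN⟩ := ((eventually_ge_atTop 1).and (hlim2.eventually_lt_const hneg)).exists
  have hN0 : (0 : ℝ) < N := by exact_mod_cast hN1
  obtain ⟨R', hR'0, hR'⟩ := hμ.ld_bound
  set c : ℝ := -((∫ g, Real.log (N2 g) ∂(mconvN μ N)) - 2 * m N) with hc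
  have hc0 : 0 < c := by
    have h1 : (∫ g, Real.log (N2 g) ∂(mconvN μ N)) / N - 2 * (m N / N) =
      ((∫ g, Real.log (N2 g) ∂(mconvN μ N)) - 2 * m N) / N := by ring
    rw [h1, div_lt_iff₀ hN0, zero_mul] at hN
    rw [hc]
    linarith
  set R : ℝ := N * R' with hR
  have hR0 : 0 ≤ R := by positivity
  set α : ℝ := min 1 (min (1 / (R + 1)) (c / (2 * (R ^ 2 + 1)))) with hα
  have hα0 : 0 < α := by positivity
  have hα1 : α ≤ 1 := min_le_left _ _
  have hα2 : α ≤ 1 / (R + 1) := (min_le_right _ _).trans (min_le_left _ _)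
  have hα3 : α ≤ c / (2 * (R ^ 2 + 1)) := (min_le_right _ _).trans (min_le_right _ _)
  rw [le_div_iff₀ (by positivity)] at hα2 hα3
  have hαR : α * R ≤ 1 := by linarith
  have hαR2 : α * R ^ 2 ≤ c / 2 := by linarith
  set s : ℝ := α * c / 2 with hs
  have hs0 : 0 < s := by positivity
  have hfac : ∀ (g : GLd d) (v w : Ed d), Real.exp (α * ld (glCLM g v) (glCLM g w)) =
      Real.exp (α * (ld (glCLM g v) (glCLM g w) - ld v w)) * Real.exp (α * ld v w) := by
    intro g v w
    rw [← Real.exp_add]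
    congr 1
    ring
  have key : ∀ v w : Ed d, 0 < wg v w →
      ∫ g, Real.exp (α * ld (glCLM g v) (glCLM g w)) ∂(mconvN μ N) ≤
        Real.exp (-s) * Real.exp (α * ld v w) := by
    intro v w hvw
    obtain ⟨hv0, hw0⟩ := ne_zero_of_wg hvw
    have hX : Continuous fun g : GLd d => ld (glCLM g v) (glCLM g w) - ld v w :=
      (cont_ld hvw).sub continuous_const
    have hmean : ∫ g, (ld (glCLM g v) (glCLM g w) - ld v w) ∂(mconvN μ N) ≤ -c := by
      have c1 : Continuous fun g : GLd d => Real.log ‖glCLM g v‖ - Real.log ‖v‖ :=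
        (cont_log_norm hv0).sub continuous_const
      have c2 : Continuous fun g : GLd d => Real.log ‖glCLM g w‖ - Real.log ‖w‖ :=
        (cont_log_norm hw0).sub continuous_const
      have c3 := cont_log_N2 hd
      have c4 : Continuous fun g : GLd d => Real.log (N2 g) -
          (Real.log ‖glCLM g v‖ - Real.log ‖v‖) := c3.sub c1
      calc _ ≤ ∫ g, (Real.log (N2 g) - (Real.log ‖glCLM g v‖ - Real.log ‖v‖) -
            (Real.log ‖glCLM g w‖ - Real.log ‖w‖)) ∂(mconvN μ N) := by
            refine integral_mono (hμ.integrable N hX) (hμ.integrable N ((c3.sub c1).sub c2))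
              fun g => ?_
            have h1 := Real.log_le_log (wg_pos_gl g hvw) (wg_le_N2 g v w)
            rw [Real.log_mul (N2_pos hd g).ne' hvw.ne'] at h1
            simp only [ld]
            linarith
        _ = (∫ g, Real.log (N2 g) ∂(mconvN μ N)) - aF μ N v - aF μ N w := by
            rw [integral_sub (hμ.integrable N c4) (hμ.integrable N c2),
              integral_sub (hμ.integrable N c3) (hμ.integrable N c1)]
            rfl
        _ ≤ _ := by
            have h1 := hm N v hv0
            have h2 := hm N w hw0
            rw [hc]
            linarith
    have hmom := hμ.exp_moment (n := N) hX (R := R) (by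
      filter_upwards [hR' N] with g hg using hg v w hvw) hmean hα0.le hαR
    simp_rw [hfac _ v w]
    rw [integral_mul_const]
    gcongr
    refine hmom.trans ?_
    have h1 := Real.add_one_le_exp (-s)
    have h2 : α ^ 2 * R ^ 2 ≤ α * (c / 2) := by
      rw [sq α, mul_assoc]
      gcongr
    have h3 : s = α * (c / 2) := by rw [hs]; ring
    linarith
  have rem : ∀ r : ℕ, r ≤ N → ∀ v w : Ed d, 0 < wg v w →
      ∫ g, Real.exp (α * ld (glCLM g v) (glCLM g w)) ∂(mconvN μ r) ≤
        Real.exp (α * R) * Real.exp (α * ld v w) := by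
    intro r hr v w hvw
    calc _ ≤ ∫ g, Real.exp (α * R) * Real.exp (α * ld v w) ∂(mconvN μ r) := by
          refine integral_mono_ae (hμ.integrable r
            (Real.continuous_exp.comp (continuous_const.mul (cont_ld hvw))))
            (integrable_const _) ?_
          filter_upwards [hR' r] with g hg
          beta_reduce
          rw [hfac g v w]
          gcongr
          refine (le_abs_self _).trans ((hg v w hvw).trans ?_)
          rw [hR]
          gcongr
      _ = _ := by simp
  refine ⟨α, hα0, hα1, s / N, by positivity, Real.exp (α * R) * Real.exp s, by positivity, ?_⟩
  intro n v w hvw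
  have hpow := hμ.submul_pow (Y := Ed d × Ed d) (fun y => Real.exp (α * ld y.1 y.2))
    (fun g y => (glCLM g y.1, glCLM g y.2)) (fun y => 0 < wg y.1 y.2)
    (fun g y hy => wg_pos_gl g hy) (fun g h y => by simp only [glCLM_mul_apply])
    (fun y => by simp only [glCLM_one_apply])
    (fun y hy => Real.continuous_exp.comp (continuous_const.mul (cont_ld hy)))
    (Real.exp_pos (-s)).le (fun y hy => key y.1 y.2 hy) (n / N)
  have htot := hμ.submul (Y := Ed d × Ed d) (fun y => Real.exp (α * ld y.1 y.2))
    (fun g y => (glCLM g y.1, glCLM g y.2)) (fun y => 0 < wg y.1 y.2)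
    (fun g y hy => wg_pos_gl g hy) (fun g h y => by simp only [glCLM_mul_apply])
    (fun y hy => Real.continuous_exp.comp (continuous_const.mul (cont_ld hy)))
    (Real.exp_pos (α * R)).le (fun y hy => rem (n % N) (Nat.mod_lt _ hN1).le y.1 y.2 hy)
    hpow (v, w) hvw
  have hn : n % N + n / N * N = n := by
    rw [mul_comm]
    exact Nat.mod_add_div n N
  rw [hn] at htot
  refine htot.trans ?_
  refine mul_le_mul_of_nonneg_right ?_ (Real.exp_pos _).le
  rw [mul_assoc]
  refine mul_le_mul_of_nonneg_left ?_ (Real.exp_pos _).le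
  rw [← Real.exp_nat_mul, ← Real.exp_add]
  apply Real.exp_le_exp.2
  have h1 : (n : ℝ) ≤ N * ((n / N : ℕ) : ℝ) + N := by
    have : n ≤ N * (n / N) + N := by
      have := Nat.mod_lt n hN1
      have := Nat.mod_add_div n N
      omega
    exact_mod_cast this
  have h2 : s / N * n ≤ s / N * (N * ((n / N : ℕ) : ℝ) + N) := by gcongr
  have h3 : s / N * (N * ((n / N : ℕ) : ℝ) + N) = s * ((n / N : ℕ) : ℝ) + s := by
    field_simp
  linarith

/-! ### Part G: the projective space and the Markov operator -/

/-- The projection from nonzero vectors. -/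
def pk (v : { v : Ed d // v ≠ 0 }) : Pd d := Projectivization.mk ℝ v.1 v.2

lemma pk_surj : Function.Surjective (pk : { v : Ed d // v ≠ 0 } → Pd d) := fun x =>
  ⟨⟨x.rep, x.rep_nonzero⟩, x.mk_rep⟩

lemma pk_quot : Topology.IsQuotientMap (pk : { v : Ed d // v ≠ 0 } → Pd d) :=
  ⟨⟨rfl⟩, pk_surj⟩

lemma pk_open : IsOpenQuotientMap (pk : { v : Ed d // v ≠ 0 } → Pd d) := by
  refine ⟨pk_surj, pk_quot.continuous, fun U hU => ?_⟩
  rw [← pk_quot.isOpen_preimage]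
  have : pk ⁻¹' (pk '' U) = ⋃ a : ℝˣ, (fun v : { v : Ed d // v ≠ 0 } =>
      (⟨(a : ℝ) • v.1, smul_ne_zero a.ne_zero v.2⟩ : { v : Ed d // v ≠ 0 })) ⁻¹' U := by
    ext v
    simp only [Set.mem_preimage, Set.mem_image, Set.mem_iUnion]
    constructor
    · rintro ⟨u, hu, h⟩
      obtain ⟨a, ha⟩ := (Projectivization.mk_eq_mk_iff ℝ u.1 v.1 u.2 v.2).1 h
      refine ⟨a, ?_⟩
      convert hu using 1
      exact Subtype.ext ha
    · rintro ⟨a, ha⟩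
      refine ⟨_, ha, ?_⟩
      exact (Projectivization.mk_eq_mk_iff ℝ _ v.1 _ v.2).2 ⟨a, rfl⟩
  rw [this]
  refine isOpen_iUnion fun a => hU.preimage ?_
  fun_prop

lemma pact_pk (g : GLd d) (v : { v : Ed d // v ≠ 0 }) :
    pact g (pk v) = pk ⟨glCLM g v.1, glCLM_ne_zero g v.2⟩ := rfl

lemma pact_eq (g : GLd d) (x : Pd d) :
    pact g x = pk ⟨glCLM g x.rep, glCLM_ne_zero g x.rep_nonzero⟩ := by
  conv_lhs => rw [← x.mk_rep]
  rfl

lemma pact_mul (g h : GLd d) (x : Pd d) : pact (g * h) x = pact g (pact h x) := by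
  obtain ⟨v, rfl⟩ := pk_surj x
  simp only [pact_pk, glCLM_mul_apply]

lemma cont_glapply : Continuous fun p : GLd d × { v : Ed d // v ≠ 0 } =>
    (⟨glCLM p.1 p.2.1, glCLM_ne_zero p.1 p.2.2⟩ : { v : Ed d // v ≠ 0 }) := by
  apply Continuous.subtype_mk
  exact (continuous_glCLM.comp continuous_fst).clm_apply (continuous_subtype_val.comp continuous_snd)

lemma cont_pact : Continuous fun p : GLd d × Pd d => pact p.1 p.2 := by
  have h := (IsOpenQuotientMap.id (X := GLd d)).prodMap (pk_open (d := d))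
  rw [h.isQuotientMap.continuous_iff]
  exact pk_quot.continuous.comp cont_glapply

lemma pdelta_pk (v w : { v : Ed d // v ≠ 0 }) :
    pdelta (pk v) (pk w) = wg v.1 w.1 / (‖v.1‖ * ‖w.1‖) := by
  obtain ⟨a, ha⟩ := Projectivization.exists_smul_eq_mk_rep ℝ v.1 v.2
  obtain ⟨b, hb⟩ := Projectivization.exists_smul_eq_mk_rep ℝ w.1 w.2
  show wg (pk v).rep (pk w).rep / (‖(pk v).rep‖ * ‖(pk w).rep‖) = _
  have ha' : (pk v).rep = (a : ℝ) • v.1 := ha.symm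
  have hb' : (pk w).rep = (b : ℝ) • w.1 := hb.symm
  rw [ha', hb', wg_smul_left, wg_smul_right, norm_smul, norm_smul, Real.norm_eq_abs,
    Real.norm_eq_abs]
  have h1 : |(a : ℝ)| ≠ 0 := abs_ne_zero.2 a.ne_zero
  have h2 : |(b : ℝ)| ≠ 0 := abs_ne_zero.2 b.ne_zero
  have h3 : ‖v.1‖ ≠ 0 := norm_ne_zero_iff.2 v.2
  have h4 : ‖w.1‖ ≠ 0 := norm_ne_zero_iff.2 w.2
  field_simp

lemma wg_pos_of_ne {x y : Pd d} (h : x ≠ y) : 0 < wg x.rep y.rep := by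
  refine lt_of_le_of_ne (wg_nonneg _ _) fun h0 => h ?_
  have h1 : ‖x.rep‖ ≠ 0 := norm_ne_zero_iff.2 x.rep_nonzero
  have h2 : ‖y.rep‖ ≠ 0 := norm_ne_zero_iff.2 y.rep_nonzero
  have h3 := (Real.sqrt_eq_zero (wg_rad_nonneg x.rep y.rep)).1 h0.symm
  have h4 : |(inner ℝ x.rep y.rep : ℝ) / (‖x.rep‖ * ‖y.rep‖)| = 1 := by
    rw [← sq_eq_sq₀ (abs_nonneg _) zero_le_one, sq_abs, div_pow, one_pow, mul_pow,
      div_eq_one_iff_eq (by positivity)]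
    linarith
  obtain ⟨_, r, hr, hy⟩ := (abs_real_inner_div_norm_mul_norm_eq_one_iff _ _).1 h4
  rw [← x.mk_rep, ← y.mk_rep]
  exact ((Projectivization.mk_eq_mk_iff' ℝ _ _ _ _).2 ⟨r, hy.symm⟩).symm

lemma exp_ld {v w : Ed d} (h : 0 < wg v w) : Real.exp (ld v w) = wg v w / (‖v‖ * ‖w‖) := by
  obtain ⟨hv, hw⟩ := ne_zero_of_wg h
  rw [ld, Real.exp_sub, Real.exp_sub, Real.exp_log h, Real.exp_log (norm_pos_iff.2 hv),
    Real.exp_log (norm_pos_iff.2 hw), div_div]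

lemma pdelta_nonneg (x y : Pd d) : 0 ≤ pdelta x y := by
  rw [pdelta]
  positivity

lemma pdelta_le_one (x y : Pd d) : pdelta x y ≤ 1 := by
  have h1 : 0 < ‖x.rep‖ := norm_pos_iff.2 x.rep_nonzero
  have h2 : 0 < ‖y.rep‖ := norm_pos_iff.2 y.rep_nonzero
  rw [pdelta, div_le_one (by positivity)]
  exact wg_le _ _

lemma pdelta_self (x : Pd d) : pdelta x x = 0 := by
  rw [pdelta, real_inner_self_eq_norm_sq]
  have : ‖x.rep‖ ^ 2 * ‖x.rep‖ ^ 2 - (‖x.rep‖ ^ 2) ^ 2 = 0 := by ring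
  rw [this, Real.sqrt_zero, zero_div]

lemma pdelta_rpow {x y : Pd d} (h : x ≠ y) (α : ℝ) :
    pdelta x y ^ α = Real.exp (α * ld x.rep y.rep) := by
  have : pdelta x y = Real.exp (ld x.rep y.rep) := (exp_ld (wg_pos_of_ne h)).symm
  rw [this, ← Real.exp_mul, mul_comm]

lemma pdelta_pos {x y : Pd d} (h : x ≠ y) : 0 < pdelta x y := by
  have : pdelta x y = Real.exp (ld x.rep y.rep) := (exp_ld (wg_pos_of_ne h)).symm
  rw [this]
  exact Real.exp_pos _

lemma pdelta_pact_rpow {x y : Pd d} (h : x ≠ y) (g : GLd d) (α : ℝ) :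
    pdelta (pact g x) (pact g y) ^ α = Real.exp (α * ld (glCLM g x.rep) (glCLM g y.rep)) := by
  rw [pact_eq, pact_eq, pdelta_pk, ← exp_ld (wg_pos_gl g (wg_pos_of_ne h)), ← Real.exp_mul,
    mul_comm]

lemma valpha_nonneg (α : ℝ) (φ : Pd d → ℝ) : 0 ≤ valpha α φ := by
  apply Real.sSup_nonneg
  rintro _ ⟨v, w, _, rfl⟩
  exact div_nonneg (abs_nonneg _) (Real.rpow_nonneg (pdelta_nonneg _ _) _)

lemma holder_le {α : ℝ} {φ : Pd d → ℝ} (h : IsHolder α φ) (x y : Pd d) :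
    |φ x - φ y| ≤ valpha α φ * pdelta x y ^ α := by
  rcases eq_or_ne x y with rfl | hxy
  · simp only [sub_self, abs_zero]
    exact mul_nonneg (valpha_nonneg _ _) (Real.rpow_nonneg (pdelta_nonneg _ _) _)
  · rw [← div_le_iff₀ (Real.rpow_pos_of_pos (pdelta_pos hxy) _)]
    exact le_csSup h ⟨x, y, hxy, rfl⟩

lemma holder_cont {α : ℝ} (hα : 0 < α) {φ : Pd d → ℝ} (h : IsHolder α φ) : Continuous φ := by
  rw [pk_quot.continuous_iff, continuous_iff_continuousAt]
  intro v
  have hc : Continuous fun w : { v : Ed d // v ≠ 0 } =>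
      valpha α φ * (wg w.1 v.1 / (‖w.1‖ * ‖v.1‖)) ^ α := by
    refine continuous_const.mul (Continuous.rpow_const ?_ fun _ => Or.inr hα.le)
    refine Continuous.div (by fun_prop) (by fun_prop) fun w => ?_
    exact mul_ne_zero (norm_ne_zero_iff.2 w.2) (norm_ne_zero_iff.2 v.2)
  have h1 := hc.tendsto v
  have h0 : wg v.1 v.1 / (‖v.1‖ * ‖v.1‖) = 0 := by
    rw [← pdelta_pk, pdelta_self]
  rw [h0, Real.zero_rpow hα.ne', mul_zero] at h1
  rw [ContinuousAt, tendsto_iff_dist_tendsto_zero]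
  refine squeeze_zero (fun _ => dist_nonneg) (fun w => ?_) h1
  rw [Real.dist_eq, ← pdelta_pk]
  exact holder_le h _ _

lemma holder_bdd {α : ℝ} (hα : 0 < α) {φ : Pd d → ℝ} (h : IsHolder α φ) (x : Pd d) :
    ∃ B, ∀ v, |φ v| ≤ B := by
  refine ⟨valpha α φ + |φ x|, fun v => ?_⟩
  have h1 := holder_le h v x
  have h2 : pdelta v x ^ α ≤ 1 := Real.rpow_le_one (pdelta_nonneg _ _) (pdelta_le_one _ _) hα.le
  have h3 := mul_le_mul_of_nonneg_left h2 (valpha_nonneg α φ)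
  have h4 := abs_sub_abs_le_abs_sub (φ v) (φ x)
  linarith

lemma cont_phi_pact {φ : Pd d → ℝ} (hφ : Continuous φ) (x : Pd d) :
    Continuous fun g : GLd d => φ (pact g x) := by
  have h1 : Continuous fun g : GLd d => (g, x) := continuous_id.prodMk continuous_const
  have h2 : Continuous fun g : GLd d => pact g x :=
    Continuous.comp (f := fun g : GLd d => (g, x))
      (g := fun p : GLd d × Pd d => pact p.1 p.2) cont_pact h1
  exact hφ.comp h2

lemma Qop_bdd {μ : Measure (GLd d)} [IsProbabilityMeasure μ] {φ : Pd d → ℝ} {B : ℝ}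
    (hB : ∀ v, |φ v| ≤ B) (v : Pd d) : |Qop μ φ v| ≤ B := by
  have := norm_integral_le_of_norm_le_const (μ := μ) (f := fun g => φ (pact g v)) (C := B)
    (Eventually.of_forall fun g => hB _)
  simpa [Qop] using this

lemma Qop_cont {μ : Measure (GLd d)} [IsProbabilityMeasure μ] {φ : Pd d → ℝ} (hφ : Continuous φ)
    {B : ℝ} (hB : ∀ v, |φ v| ≤ B) : Continuous (Qop μ φ) := by
  rw [pk_quot.continuous_iff]
  refine continuous_of_dominated (bound := fun _ => B)
    (F := fun (v : { v : Ed d // v ≠ 0 }) (g : GLd d) => φ (pact g (pk v))) (fun v => ?_)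
    (fun v => Eventually.of_forall fun g => hB _) (integrable_const _)
    (Eventually.of_forall fun g => ?_)
  · exact (cont_phi_pact hφ _).aestronglyMeasurable
  · have h1 : Continuous fun v : { v : Ed d // v ≠ 0 } => (g, pk v) :=
      continuous_const.prodMk pk_quot.continuous
    have h2 : Continuous fun v : { v : Ed d // v ≠ 0 } => pact g (pk v) :=
      Continuous.comp (f := fun v : { v : Ed d // v ≠ 0 } => (g, pk v))
        (g := fun p : GLd d × Pd d => pact p.1 p.2) cont_pact h1
    exact hφ.comp h2

lemma Qop_int {μ : Measure (GLd d)} [IsProbabilityMeasure μ] {η : Measure (Pd d)}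
    [IsProbabilityMeasure η] (hη : Stationary μ η) {φ : Pd d → ℝ} (hφ : Continuous φ)
    {B : ℝ} (hB : ∀ v, |φ v| ≤ B) : ∫ v, Qop μ φ v ∂η = ∫ v, φ v ∂η := by
  rw [hη φ hφ ⟨B, hB⟩]
  refine (integral_integral_swap (f := fun (g : GLd d) (v : Pd d) => φ (pact g v)) ?_).symm
  refine Integrable.of_bound (C := B) (hφ.comp cont_pact).aestronglyMeasurable ?_
  exact Eventually.of_forall fun p => hB _

lemma Qop_iter {μ : Measure (GLd d)} [IsProbabilityMeasure μ] {η : Measure (Pd d)}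
    [IsProbabilityMeasure η] (hη : Stationary μ η) {φ : Pd d → ℝ} (hφ : Continuous φ)
    {B : ℝ} (hB : ∀ v, |φ v| ≤ B) (n : ℕ) :
    Continuous ((Qop μ)^[n] φ) ∧ (∀ v, |(Qop μ)^[n] φ v| ≤ B) ∧
      ∫ v, (Qop μ)^[n] φ v ∂η = ∫ v, φ v ∂η := by
  induction n with
  | zero => exact ⟨hφ, hB, rfl⟩
  | succ n ih =>
    obtain ⟨h1, h2, h3⟩ := ih
    rw [Function.iterate_succ_apply']
    exact ⟨Qop_cont h1 h2, Qop_bdd h2, (Qop_int hη h1 h2).trans h3⟩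

lemma CptProb.Qop_eq {μ : Measure (GLd d)} (hμ : CptProb μ) {φ : Pd d → ℝ} (hφ : Continuous φ)
    (n : ℕ) (hn : 1 ≤ n) (v : Pd d) :
    (Qop μ)^[n] φ v = ∫ g, φ (pact g v) ∂(mconvN μ n) := by
  have := hμ.prob
  induction n, hn using Nat.le_induction generalizing v with
  | base => rw [mconvN_one]; rfl
  | succ n hn ih =>
    rw [Function.iterate_succ_apply', hμ.integral_add n 1 (cont_phi_pact hφ v), mconvN_one]
    simp only [pact_mul, Qop, ← ih]

theorem strong_mixing_markov_operator
    (d : ℕ) (hd : 2 ≤ d) (S : Set (GLd d)) (hS : IsCompact S)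
    (μ₀ : Measure (GLd d)) [IsProbabilityMeasure μ₀] (hμ₀S : μ₀ Sᶜ = 0)
    (hqi : QuasiIrreducible μ₀) (hgap : L2 μ₀ < L1 μ₀) :
    ∃ α : ℝ, 0 < α ∧ α ≤ 1 ∧ ∃ θ : ℝ, 1 < θ ∧ ∃ C : ℝ, 0 < C ∧
      ∀ (η : Measure (Pd d)) [IsProbabilityMeasure η], Stationary μ₀ η →
        ∀ φ : Pd d → ℝ, IsHolder α φ → ∀ n : ℕ, 1 ≤ n → ∀ v : Pd d,
          |(Qop μ₀)^[n] φ v - ∫ w, φ w ∂η| ≤ C * θ ^ (-(n : ℝ)) * valpha α φ := by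
  have hμ : CptProb μ₀ := ⟨inferInstance, S, hS, hμ₀S⟩
  obtain ⟨α, hα0, hα1, s, hs, C, hC, hcon⟩ := hμ.contraction hd hqi hgap
  refine ⟨α, hα0, hα1, Real.exp s, Real.one_lt_exp_iff.2 hs, C, hC, ?_⟩
  intro η _ hη φ hφ n hn v
  have hφc := holder_cont hα0 hφ
  obtain ⟨B, hB⟩ := holder_bdd hα0 hφ v
  obtain ⟨h1, h2, h3⟩ := Qop_iter hη hφc hB n
  set K : ℝ := C * Real.exp s ^ (-(n : ℝ)) * valpha α φ with hK
  have hK0 : 0 ≤ K := mul_nonneg (by positivity) (valpha_nonneg _ _)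
  have hexp : Real.exp s ^ (-(n : ℝ)) = Real.exp (-(s * n)) := by
    rw [← Real.exp_mul]
    congr 1
    ring
  have hdiff : ∀ w, |(Qop μ₀)^[n] φ v - (Qop μ₀)^[n] φ w| ≤ K := by
    intro w
    rcases eq_or_ne v w with rfl | hvw
    · simpa using hK0
    have hwg := wg_pos_of_ne hvw
    rw [hμ.Qop_eq hφc n hn, hμ.Qop_eq hφc n hn, ← integral_sub
      (hμ.integrable n (cont_phi_pact hφc v)) (hμ.integrable n (cont_phi_pact hφc w))]
    have hci : Continuous fun g : GLd d =>
        Real.exp (α * ld (glCLM g v.rep) (glCLM g w.rep)) :=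
      Real.continuous_exp.comp (continuous_const.mul (cont_ld hwg))
    have e1 := norm_integral_le_of_norm_le (μ := mconvN μ₀ n)
      (f := fun g => φ (pact g v) - φ (pact g w))
      (g := fun g => valpha α φ * Real.exp (α * ld (glCLM g v.rep) (glCLM g w.rep)))
      ((hμ.integrable n hci).const_mul _) (Eventually.of_forall fun g => by
        rw [Real.norm_eq_abs, ← pdelta_pact_rpow hvw]
        exact holder_le hφ _ _)
    rw [Real.norm_eq_abs, integral_const_mul] at e1
    refine e1.trans ?_
    have e2 := hcon n v.rep w.rep hwg
    have e3 : Real.exp (α * ld v.rep w.rep) ≤ 1 := by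
      rw [← pdelta_rpow hvw]
      exact Real.rpow_le_one (pdelta_nonneg _ _) (pdelta_le_one _ _) hα0.le
    have e4 : C * Real.exp (-(s * n)) * Real.exp (α * ld v.rep w.rep) ≤
        C * Real.exp (-(s * n)) * 1 := by gcongr
    rw [hK, hexp, mul_comm]
    exact mul_le_mul_of_nonneg_right (by linarith) (valpha_nonneg _ _)
  have hInteg : Integrable ((Qop μ₀)^[n] φ) η :=
    Integrable.of_bound (C := B) h1.aestronglyMeasurable (Eventually.of_forall h2)
  rw [← h3]
  have e5 : (Qop μ₀)^[n] φ v - ∫ w, (Qop μ₀)^[n] φ w ∂η =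
      ∫ w, ((Qop μ₀)^[n] φ v - (Qop μ₀)^[n] φ w) ∂η := by
    rw [integral_sub (integrable_const _) hInteg]
    simp
  rw [e5]
  have e6 := norm_integral_le_of_norm_le_const (μ := η)
    (f := fun w => (Qop μ₀)^[n] φ v - (Qop μ₀)^[n] φ w) (C := K) (Eventually.of_forall hdiff)
  simpa using e6

end
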